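/- arXiv:2510.24119 — 2 statements merged into one kernel-verified Lean document; each statement's English description precedes it below -/
import Mathlib

section
/- Lipschitz constant of the Feynman–Kac semigroup is controlled by the rescaled supremum norms: Assume hypothesis (C), and let V : X → ℝ be Lipschitz continuous. Set λ₁ := inf_{n≥1} ‖Q_n^V 1‖_∞^{1/n} and M_n := max_{0≤k≤n} λ₁^{−k}·‖Q_k^V 1‖_∞. Then there exists a constant C_V < ∞ such that for every Lipschitz continuous f : X → ℝ and every n ∈ ℕ, Lip(Q_n^V f) ≤ C_V·‖f‖_L·λ₁^n·M_n; equivalently, λ₁^{−n}·Lip(Q_n^V f) ≤ C_V·‖f‖_L·M_n. -/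
open MeasureTheory Filter Topology
open scoped ENNReal NNReal

noncomputable def kIter {X : Type*} [MeasurableSpace X] (κ : X → Measure X) : ℕ → X → Measure X
  | 0 => fun x => Measure.dirac x
  | n + 1 => fun x => (kIter κ n x).bind κ

noncomputable def FK {X : Type*} [MeasurableSpace X] (κ : X → Measure X) (V f : X → ℝ) (x : X) : ℝ :=
  ∫ y, Real.exp (V y) * f y ∂(κ x)

noncomputable def FKiter {X : Type*} [MeasurableSpace X] (κ : X → Measure X) (V : X → ℝ) :
    ℕ → (X → ℝ) → X → ℝ
  | 0 => fun f => f
  | n + 1 => fun f => FK κ V (FKiter κ V n f)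

noncomputable def supNorm {X : Type*} (f : X → ℝ) : ℝ := ⨆ x, |f x|

noncomputable def lipConst {X : Type*} [MetricSpace X] (f : X → ℝ) : ℝ :=
  sSup {c | ∃ x y, x ≠ y ∧ c = |f x - f y| / dist x y}

noncomputable def lipNorm {X : Type*} [MetricSpace X] (f : X → ℝ) : ℝ := supNorm f + lipConst f

/-!
Write `Q = Q^V`. One coupled step turns a pointwise slope bound
`|h x - h x'| ≤ G x · d(x, x')` into the slope bound `B ‖h‖_∞ + q · Q G` for `Q h`, since `q`
contracts on the good event while the bad event costs `O(d(x, x'))`. As `q < 1`, the operator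
`(q / λ₁) Q` has spectral radius below one, so there is a bounded `W ≥ 0` with
`1 + (q / λ₁) Q W ≤ W`. The bound "the slope of `Q_n f` is at most `c λ₁ⁿ M_n W`" then reproduces
itself from `n` to `n + 1` as soon as `B ‖f‖_∞ ≤ c λ₁`.
-/

section Norms

variable {X : Type*}

lemma supNorm_nonneg (f : X → ℝ) : 0 ≤ supNorm f :=
  Real.iSup_nonneg fun _ => abs_nonneg _

lemma abs_le_supNorm {f : X → ℝ} (hf : ∃ c, ∀ x, |f x| ≤ c) (x : X) : |f x| ≤ supNorm f := by
  obtain ⟨c, hc⟩ := hf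
  exact le_ciSup (f := fun x => |f x|) ⟨c, Set.forall_mem_range.2 hc⟩ x

lemma lipConst_nonneg [MetricSpace X] (f : X → ℝ) : 0 ≤ lipConst f := by
  refine Real.sSup_nonneg ?_
  rintro c ⟨x, y, -, rfl⟩
  positivity

lemma supNorm_le_lipNorm [MetricSpace X] (f : X → ℝ) : supNorm f ≤ lipNorm f :=
  le_add_of_nonneg_right (lipConst_nonneg f)

lemma lipConst_le_lipNorm [MetricSpace X] (f : X → ℝ) : lipConst f ≤ lipNorm f :=
  le_add_of_nonneg_left (supNorm_nonneg f)

lemma abs_sub_le_lipConst_mul_dist [MetricSpace X] {f : X → ℝ} {K : ℝ≥0} (hf : LipschitzWith K f)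
    (x y : X) : |f x - f y| ≤ lipConst f * dist x y := by
  rcases eq_or_ne x y with rfl | hxy
  · simp
  rw [← div_le_iff₀ (dist_pos.2 hxy)]
  refine le_csSup ⟨K, ?_⟩ ⟨x, y, hxy, rfl⟩
  rintro c ⟨u, v, huv, rfl⟩
  rw [div_le_iff₀ (dist_pos.2 huv)]
  exact hf.dist_le_mul u v

end Norms

section Exponential

lemma abs_exp_sub_exp_le {E a b : ℝ} (ha : Real.exp a ≤ E) (hb : Real.exp b ≤ E) :
    |Real.exp a - Real.exp b| ≤ E * |a - b| := by
  wlog hba : b ≤ a generalizing a b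
  · rw [abs_sub_comm, abs_sub_comm a]
    exact this hb ha (le_of_not_ge hba)
  rw [abs_of_nonneg (sub_nonneg.2 (Real.exp_le_exp.2 hba)), abs_of_nonneg (sub_nonneg.2 hba)]
  calc Real.exp a - Real.exp b = Real.exp a * (1 - Real.exp (b - a)) := by
        rw [mul_sub, ← Real.exp_add]; ring_nf
    _ ≤ Real.exp a * (a - b) :=
        mul_le_mul_of_nonneg_left (by linarith [Real.add_one_le_exp (b - a)]) (Real.exp_pos a).le
    _ ≤ E * (a - b) := mul_le_mul_of_nonneg_right ha (sub_nonneg.2 hba)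

lemma abs_exp_mul_le {E a c s : ℝ} (ha : Real.exp a ≤ E) (hs : |s| ≤ c) :
    |Real.exp a * s| ≤ E * c := by
  rw [abs_mul, Real.abs_exp]
  exact mul_le_mul ha hs (abs_nonneg s) ((Real.exp_pos a).le.trans ha)

lemma abs_exp_mul_sub_exp_mul_le {E a b c s t : ℝ} (ha : Real.exp a ≤ E) (hb : Real.exp b ≤ E)
    (ht : |t| ≤ c) :
    |Real.exp a * s - Real.exp b * t| ≤ Real.exp a * |s - t| + E * |a - b| * c := by
  have hE : 0 ≤ E := (Real.exp_pos a).le.trans ha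
  calc |Real.exp a * s - Real.exp b * t|
      = |Real.exp a * (s - t) + (Real.exp a - Real.exp b) * t| := by ring_nf
    _ ≤ |Real.exp a * (s - t)| + |(Real.exp a - Real.exp b) * t| := abs_add_le _ _
    _ = Real.exp a * |s - t| + |Real.exp a - Real.exp b| * |t| := by
        rw [abs_mul, abs_mul, Real.abs_exp]
    _ ≤ Real.exp a * |s - t| + E * |a - b| * c := by gcongr; exact abs_exp_sub_exp_le ha hb

end Exponential

/-- Bounded measurable real functions, the domain on which Feynman–Kac operators are well behaved
(on other functions the integral defining `FK` may take its junk value `0`). -/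
structure IsBoundedMeasurable {X : Type*} [MeasurableSpace X] (f : X → ℝ) : Prop where
  measurable : Measurable f
  exists_abs_le : ∃ c, ∀ x, |f x| ≤ c

namespace IsBoundedMeasurable

variable {X : Type*} [MeasurableSpace X] {f g : X → ℝ}

lemma const (a : ℝ) : IsBoundedMeasurable fun _ : X => a :=
  ⟨measurable_const, |a|, fun _ => le_rfl⟩

lemma add (hf : IsBoundedMeasurable f) (hg : IsBoundedMeasurable g) :
    IsBoundedMeasurable (f + g) := by
  obtain ⟨hfm, a, ha⟩ := hf
  obtain ⟨hgm, b, hb⟩ := hg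
  exact ⟨hfm.add hgm, a + b, fun x => (abs_add_le _ _).trans (add_le_add (ha x) (hb x))⟩

lemma mul (hf : IsBoundedMeasurable f) (hg : IsBoundedMeasurable g) :
    IsBoundedMeasurable fun x => f x * g x := by
  obtain ⟨hfm, a, ha⟩ := hf
  obtain ⟨hgm, b, hb⟩ := hg
  refine ⟨hfm.mul hgm, a * b, fun x => ?_⟩
  rw [abs_mul]
  exact mul_le_mul (ha x) (hb x) (abs_nonneg _) ((abs_nonneg _).trans (ha x))

lemma sum {ι : Type*} (s : Finset ι) {f : ι → X → ℝ} (hf : ∀ i ∈ s, IsBoundedMeasurable (f i)) :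
    IsBoundedMeasurable fun x => ∑ i ∈ s, f i x := by
  rw [← Finset.sum_fn]
  exact Finset.sum_induction f IsBoundedMeasurable (fun _ _ => add) (const 0) hf

lemma exp (hf : Measurable f) {E : ℝ} (hE : ∀ x, Real.exp (f x) ≤ E) :
    IsBoundedMeasurable fun x => Real.exp (f x) :=
  ⟨hf.exp, E, fun x => (Real.abs_exp _).trans_le (hE x)⟩

lemma integrable (hf : IsBoundedMeasurable f) (μ : Measure X) [IsFiniteMeasure μ] :
    Integrable f μ := by
  obtain ⟨hfm, c, hc⟩ := hf
  exact .of_bound hfm.aestronglyMeasurable c (ae_of_all μ hc)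

end IsBoundedMeasurable

section FeynmanKac

open ProbabilityTheory

variable {X : Type*} [MeasurableSpace X] {V f g : X → ℝ}

lemma FK_const_mul (κ : X → Measure X) (V f : X → ℝ) (c : ℝ) (x : X) :
    FK κ V (fun y => c * f y) x = c * FK κ V f x := by
  simp only [FK, mul_left_comm _ c, integral_const_mul]

lemma FK_nonneg (κ : X → Measure X) (V : X → ℝ) (hf : ∀ y, 0 ≤ f y) (x : X) : 0 ≤ FK κ V f x :=
  integral_nonneg fun y => mul_nonneg (Real.exp_pos _).le (hf y)

lemma FKiter_one_nonneg (κ : X → Measure X) (V : X → ℝ) (n : ℕ) (x : X) :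
    0 ≤ FKiter κ V n 1 x := by
  induction n generalizing x with
  | zero => exact zero_le_one
  | succ n ih => exact FK_nonneg κ V ih x

variable {κ : Kernel X X} [IsFiniteKernel κ] (hE : IsBoundedMeasurable fun y => Real.exp (V y))
include hE

lemma FK_sum_const_mul {ι : Type*} (s : Finset ι) (c : ι → ℝ) {f : ι → X → ℝ}
    (hf : ∀ i ∈ s, IsBoundedMeasurable (f i)) (x : X) :
    FK κ V (fun y => ∑ i ∈ s, c i * f i y) x = ∑ i ∈ s, c i * FK κ V (f i) x := by
  simp only [FK, Finset.mul_sum, mul_left_comm _ (c _)]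
  rw [integral_finsetSum s fun i hi => ((hE.mul (hf i hi)).integrable _).const_mul (c i)]
  simp only [integral_const_mul]

lemma abs_FK_le_FK (hg : IsBoundedMeasurable g) (h : ∀ y, |f y| ≤ g y) (x : X) :
    |FK κ V f x| ≤ FK κ V g x := by
  rw [FK, ← Real.norm_eq_abs]
  refine norm_integral_le_of_norm_le ((hE.mul hg).integrable _) (ae_of_all _ fun y => ?_)
  rw [norm_mul, Real.norm_eq_abs, Real.abs_exp]
  exact mul_le_mul_of_nonneg_left (h y) (Real.exp_pos _).le

lemma isBoundedMeasurable_FK (hf : IsBoundedMeasurable f) : IsBoundedMeasurable (FK κ V f) := by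
  obtain ⟨hm, c, hc⟩ := hE.mul hf
  refine ⟨hm.stronglyMeasurable.integral_kernel.measurable, c * κ.bound.toReal, fun x => ?_⟩
  have hc0 : 0 ≤ c := (abs_nonneg _).trans (hc x)
  calc |∫ y, Real.exp (V y) * f y ∂(κ x)| ≤ c * (κ x).real Set.univ :=
        (Real.norm_eq_abs _).symm.trans_le (norm_integral_le_of_norm_le_const (ae_of_all _ hc))
    _ ≤ c * κ.bound.toReal := by
        gcongr
        exact ENNReal.toReal_mono κ.bound_ne_top (κ.measure_le_bound x Set.univ)

lemma isBoundedMeasurable_FKiter (hf : IsBoundedMeasurable f) (n : ℕ) :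
    IsBoundedMeasurable (FKiter κ V n f) := by
  induction n with
  | zero => exact hf
  | succ n ih => exact isBoundedMeasurable_FK hE ih

lemma abs_FKiter_le {c : ℝ} (hf : ∀ y, |f y| ≤ c) (n : ℕ) (x : X) :
    |FKiter κ V n f x| ≤ c * FKiter κ V n 1 x := by
  induction n generalizing x with
  | zero => simpa [FKiter] using hf x
  | succ n ih =>
    have hQ : IsBoundedMeasurable (FKiter κ V n 1) :=
      isBoundedMeasurable_FKiter hE (.const 1) n
    exact (abs_FK_le_FK hE ((IsBoundedMeasurable.const c).mul hQ) ih x).trans_eq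
      (FK_const_mul _ _ _ c x)

lemma FKiter_one_le_supNorm (n : ℕ) (x : X) : FKiter κ V n 1 x ≤ supNorm (FKiter κ V n 1) :=
  (le_abs_self _).trans
    (abs_le_supNorm (isBoundedMeasurable_FKiter hE (.const 1) n).exists_abs_le x)

lemma abs_FKiter_le_supNorm_mul_supNorm (hf : ∃ c, ∀ x, |f x| ≤ c) (n : ℕ) (x : X) :
    |FKiter κ V n f x| ≤ supNorm f * supNorm (FKiter κ V n 1) :=
  (abs_FKiter_le hE (abs_le_supNorm hf) n x).trans
    (mul_le_mul_of_nonneg_left (FKiter_one_le_supNorm hE n x) (supNorm_nonneg f))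

omit [IsFiniteKernel κ] in
lemma pow_le_FKiter_one [IsMarkovKernel κ] {e : ℝ} (he : 0 ≤ e) (hVe : ∀ y, e ≤ Real.exp (V y))
    (n : ℕ) (x : X) : e ^ n ≤ FKiter κ V n 1 x := by
  induction n generalizing x with
  | zero => exact le_of_eq (pow_zero e)
  | succ n ih =>
    have hQ : IsBoundedMeasurable (FKiter κ V n 1) :=
      isBoundedMeasurable_FKiter hE (.const 1) n
    calc e ^ (n + 1) = ∫ _, e ^ (n + 1) ∂(κ x) := by simp
      _ ≤ FK κ V (FKiter κ V n 1) x :=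
        integral_mono (integrable_const _) ((hE.mul hQ).integrable _) fun y => by
          simp only [pow_succ']
          exact mul_le_mul (hVe y) (ih y) (by positivity) (Real.exp_pos _).le

end FeynmanKac

section GrowthRate

lemma exists_pow_mul_lt_one_of_mul_iInf_rpow_lt_one {a : ℕ → ℝ} (ha : ∀ n, 0 ≤ a n) {r : ℝ}
    (hr : 0 ≤ r) (h : r * ⨅ n : {n : ℕ // 1 ≤ n}, a n ^ ((n : ℕ) : ℝ)⁻¹ < 1) :
    ∃ n, r ^ n * a n < 1 := by
  rw [Real.mul_iInf_of_nonneg hr] at h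
  have : Nonempty {n : ℕ // 1 ≤ n} := ⟨1, le_rfl⟩
  obtain ⟨⟨n, hn⟩, hlt⟩ := exists_lt_of_ciInf_lt h
  have hn0 : n ≠ 0 := Nat.one_le_iff_ne_zero.1 hn
  refine ⟨n, ?_⟩
  calc r ^ n * a n = (r * a n ^ (n : ℝ)⁻¹) ^ n := by
        rw [mul_pow, Real.rpow_inv_natCast_pow (ha n) hn0]
    _ < 1 := pow_lt_one₀ (mul_nonneg hr (Real.rpow_nonneg (ha n) _)) hlt hn0

open ProbabilityTheory

variable {X : Type*} [MeasurableSpace X]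

/-- `λ₁ = inf_{n ≥ 1} ‖Q_n^V 1‖_∞^{1/n}`, the exponential growth rate of the Feynman–Kac
semigroup. -/
noncomputable def growthRate (κ : X → Measure X) (V : X → ℝ) : ℝ :=
  ⨅ n : {n : ℕ // 1 ≤ n}, supNorm (FKiter κ V n 1) ^ ((n : ℕ) : ℝ)⁻¹

/-- `M_n = max_{0 ≤ k ≤ n} λ₁^{-k} ‖Q_k^V 1‖_∞`, the excess of the semigroup over its growth
rate up to time `n`. -/
noncomputable def maxRescaledSupNorm (κ : X → Measure X) (V : X → ℝ) (n : ℕ) : ℝ :=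
  ⨆ k : Fin (n + 1), (growthRate κ V)⁻¹ ^ (k : ℕ) * supNorm (FKiter κ V k 1)

lemma le_maxRescaledSupNorm (κ : X → Measure X) (V : X → ℝ) {k n : ℕ} (hk : k ≤ n) :
    (growthRate κ V)⁻¹ ^ k * supNorm (FKiter κ V k 1) ≤ maxRescaledSupNorm κ V n :=
  le_ciSup (f := fun k : Fin (n + 1) => (growthRate κ V)⁻¹ ^ (k : ℕ) * supNorm (FKiter κ V k 1))
    (Set.finite_range _).bddAbove ⟨k, Nat.lt_succ_of_le hk⟩

lemma maxRescaledSupNorm_mono (κ : X → Measure X) (V : X → ℝ) :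
    Monotone (maxRescaledSupNorm κ V) := fun _ _ hmn =>
  ciSup_le fun k => le_maxRescaledSupNorm κ V ((Nat.le_of_lt_succ k.2).trans hmn)

lemma one_le_maxRescaledSupNorm [Nonempty X] (κ : X → Measure X) (V : X → ℝ) (n : ℕ) :
    1 ≤ maxRescaledSupNorm κ V n := by
  simpa [FKiter, supNorm] using le_maxRescaledSupNorm κ V n.zero_le

lemma supNorm_FKiter_one_le {κ : X → Measure X} {V : X → ℝ} (hpos : 0 < growthRate κ V) (n : ℕ) :
    supNorm (FKiter κ V n 1) ≤ growthRate κ V ^ n * maxRescaledSupNorm κ V n := by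
  rw [← inv_mul_le_iff₀ (pow_pos hpos n), ← inv_pow]
  exact le_maxRescaledSupNorm κ V le_rfl

variable {κ : Kernel X X} {V : X → ℝ} (hE : IsBoundedMeasurable fun y => Real.exp (V y))
include hE

lemma growthRate_pos [Nonempty X] [IsMarkovKernel κ] {e : ℝ} (he : 0 < e)
    (hVe : ∀ y, e ≤ Real.exp (V y)) : 0 < growthRate κ V := by
  have : Nonempty {n : ℕ // 1 ≤ n} := ⟨1, le_rfl⟩
  refine he.trans_le (le_ciInf fun ⟨n, hn⟩ => ?_)
  have hpow : e ^ n ≤ supNorm (FKiter κ V n 1) :=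
    (pow_le_FKiter_one hE he.le hVe n (Classical.arbitrary X)).trans (FKiter_one_le_supNorm hE n _)
  calc e = (e ^ n) ^ (n : ℝ)⁻¹ :=
        (Real.pow_rpow_inv_natCast he.le (Nat.one_le_iff_ne_zero.1 hn)).symm
    _ ≤ supNorm (FKiter κ V n 1) ^ (n : ℝ)⁻¹ := by gcongr

/-- A truncated Neumann series: once `θ = ‖(r Q)^n 1‖_∞ < 1`, take
`W = (1 - θ)⁻¹ ∑_{k < n} (r Q)^k 1`; then `W - r Q W` telescopes to `(1 - θ)⁻¹ (1 - (r Q)^n 1)`. -/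
lemma exists_one_add_mul_FK_le [IsFiniteKernel κ] {r : ℝ} (hr : 0 ≤ r)
    (hr1 : r * growthRate κ V < 1) :
    ∃ W : X → ℝ, IsBoundedMeasurable W ∧ (∀ x, 0 ≤ W x) ∧ ∀ x, 1 + r * FK κ V W x ≤ W x := by
  obtain ⟨n, hn⟩ := exists_pow_mul_lt_one_of_mul_iInf_rpow_lt_one
    (fun n => supNorm_nonneg (FKiter κ V n 1)) hr hr1
  set θ := r ^ n * supNorm (FKiter κ V n 1)
  have hθ : 0 < 1 - θ := sub_pos.2 hn
  have hQ (k : ℕ) : IsBoundedMeasurable (FKiter κ V k 1) :=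
    isBoundedMeasurable_FKiter hE (.const 1) k
  refine ⟨fun x => ∑ k ∈ Finset.range n, r ^ k / (1 - θ) * FKiter κ V k 1 x,
    .sum _ fun k _ => (IsBoundedMeasurable.const _).mul (hQ k),
    fun x => Finset.sum_nonneg fun k _ => mul_nonneg (by positivity) (FKiter_one_nonneg κ V k x),
    fun x => ?_⟩
  set b : ℕ → ℝ := fun k => r ^ k / (1 - θ) * FKiter κ V k 1 x
  have hFK : r * FK κ V (fun y => ∑ k ∈ Finset.range n, r ^ k / (1 - θ) * FKiter κ V k 1 y) x
      = ∑ k ∈ Finset.range n, b (k + 1) := by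
    rw [FK_sum_const_mul hE _ _ fun k _ => hQ k, Finset.mul_sum]
    refine Finset.sum_congr rfl fun k _ => ?_
    simp only [b, FKiter]
    ring
  have htelescope : ∑ k ∈ Finset.range n, b (k + 1) - ∑ k ∈ Finset.range n, b k = b n - b 0 := by
    rw [← Finset.sum_sub_distrib, Finset.sum_range_sub]
  have hends : 1 ≤ b 0 - b n := by
    have hb0 : b 0 = 1 / (1 - θ) := by simp [b, FKiter]
    have hbn : b n ≤ θ / (1 - θ) := by
      simp only [b, θ, div_mul_eq_mul_div]
      gcongr
      exact FKiter_one_le_supNorm hE n x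
    calc 1 = 1 / (1 - θ) - θ / (1 - θ) := by rw [← sub_div, div_self hθ.ne']
      _ ≤ b 0 - b n := by rw [hb0]; gcongr
  rw [hFK]
  linarith

end GrowthRate

section Coupling

lemma abs_integral_map_sub_integral_map_le {Ω X : Type*} [MeasurableSpace Ω] [MeasurableSpace X]
    {P : Measure Ω} [IsFiniteMeasure P] {Y Y' : Ω → X} (hY : Measurable Y) (hY' : Measurable Y')
    {u g : X → ℝ} {A : ℝ} (hu : Measurable u) (huA : ∀ y, |u y| ≤ A)
    (hg : Integrable g (P.map Y)) (hg0 : ∀ y, 0 ≤ g y) {s : Set Ω}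
    (hs : ∀ ω ∉ s, |u (Y ω) - u (Y' ω)| ≤ g (Y ω)) :
    |∫ y, u y ∂(P.map Y) - ∫ y, u y ∂(P.map Y')|
      ≤ ∫ y, g y ∂(P.map Y) + P.real s * (2 * A) := by
  set t := toMeasurable P s
  have ht : MeasurableSet t := measurableSet_toMeasurable P s
  have hubm : IsBoundedMeasurable u := ⟨hu, A, huA⟩
  have huY : Integrable (fun ω => u (Y ω)) P := (hubm.integrable _).comp_measurable hY
  have huY' : Integrable (fun ω => u (Y' ω)) P := (hubm.integrable _).comp_measurable hY'
  have hgY : Integrable (fun ω => g (Y ω)) P := hg.comp_measurable hY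
  have hind : Integrable (t.indicator fun _ => 2 * A) P := (integrable_const _).indicator ht
  have hpt (ω : Ω) : |u (Y ω) - u (Y' ω)| ≤ g (Y ω) + t.indicator (fun _ => 2 * A) ω := by
    by_cases hω : ω ∈ t
    · rw [Set.indicator_of_mem hω]
      linarith [abs_sub (u (Y ω)) (u (Y' ω)), huA (Y ω), huA (Y' ω), hg0 (Y ω)]
    · rw [Set.indicator_of_notMem hω, add_zero]
      exact hs ω fun h => hω (subset_toMeasurable P s h)
  rw [integral_map hY.aemeasurable hu.aestronglyMeasurable,
    integral_map hY'.aemeasurable hu.aestronglyMeasurable,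
    integral_map hY.aemeasurable hg.aestronglyMeasurable, ← integral_sub huY huY']
  calc |∫ ω, u (Y ω) - u (Y' ω) ∂P| ≤ ∫ ω, g (Y ω) + t.indicator (fun _ => 2 * A) ω ∂P :=
        (Real.norm_eq_abs _).symm.trans_le
          (norm_integral_le_of_norm_le (hgY.add hind) (ae_of_all _ hpt))
    _ = ∫ ω, g (Y ω) ∂P + P.real s * (2 * A) := by
        rw [integral_add hgY hind, integral_indicator_const _ ht, smul_eq_mul, Measure.real,
          measure_toMeasurable, Measure.real]

/-- Hypothesis (C): `R x x'` and `R' x x'` couple `κ x` and `κ x'`, and the coupled points are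
within `q · d(x, x')` of each other except with probability at most `C · d(x, x')`. -/
structure IsContractingCoupling {X Ω : Type*} [MetricSpace X] [MeasurableSpace X]
    [MeasurableSpace Ω] (κ : X → Measure X) (P : Measure Ω) (q C : ℝ) (R R' : X → X → Ω → X) :
    Prop where
  measurable_left : ∀ x x', Measurable (R x x')
  measurable_right : ∀ x x', Measurable (R' x x')
  map_left : ∀ x x', P.map (R x x') = κ x
  map_right : ∀ x x', P.map (R' x x') = κ x'
  measure_lt_dist_le : ∀ x x',
    P {ω | q * dist x x' < dist (R x x' ω) (R' x x' ω)} ≤ ENNReal.ofReal (C * dist x x')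

lemma abs_exp_mul_sub_exp_mul_le_of_dist_le {X : Type*} [PseudoMetricSpace X] {V h G : X → ℝ}
    {KV : ℝ≥0} (hV : LipschitzWith KV V) {E c δ : ℝ} (hVE : ∀ y, Real.exp (V y) ≤ E)
    (hhc : ∀ y, |h y| ≤ c) (hG0 : ∀ y, 0 ≤ G y)
    (hslope : ∀ y y', |h y - h y'| ≤ G y * dist y y') {y y' : X} (hδ : dist y y' ≤ δ) :
    |Real.exp (V y) * h y - Real.exp (V y') * h y'|
      ≤ Real.exp (V y) * (G y * δ) + E * (KV * δ) * c := by
  have hE0 : 0 ≤ E := (Real.exp_pos _).le.trans (hVE y)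
  have hc0 : 0 ≤ c := (abs_nonneg _).trans (hhc y)
  have hh : |h y - h y'| ≤ G y * δ :=
    (hslope y y').trans (mul_le_mul_of_nonneg_left hδ (hG0 y))
  have hVy : |V y - V y'| ≤ KV * δ := (hV.dist_le_mul y y').trans (by gcongr)
  calc |Real.exp (V y) * h y - Real.exp (V y') * h y'|
      ≤ Real.exp (V y) * |h y - h y'| + E * |V y - V y'| * c :=
        abs_exp_mul_sub_exp_mul_le (hVE y) (hVE y') (hhc y')
    _ ≤ Real.exp (V y) * (G y * δ) + E * (KV * δ) * c := by gcongr

open ProbabilityTheory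

variable {X Ω : Type*} [MetricSpace X] [MeasurableSpace X] [OpensMeasurableSpace X]
  [MeasurableSpace Ω] {κ : Kernel X X} [IsMarkovKernel κ] {P : Measure Ω} [IsProbabilityMeasure P]
  {q C : ℝ} {R R' : X → X → Ω → X} (hR : IsContractingCoupling κ P q C R R') (hq : 0 ≤ q)
  (hC : 0 ≤ C) {V : X → ℝ} {KV : ℝ≥0} (hV : LipschitzWith KV V) {E : ℝ}
  (hVE : ∀ y, Real.exp (V y) ≤ E)

include hR hq hC hV hVE

lemma abs_FK_sub_FK_le {h G : X → ℝ} {c : ℝ} (hh : Measurable h) (hhc : ∀ y, |h y| ≤ c)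
    (hG : IsBoundedMeasurable G) (hG0 : ∀ y, 0 ≤ G y)
    (hslope : ∀ y y', |h y - h y'| ≤ G y * dist y y') (x x' : X) :
    |FK κ V h x - FK κ V h x'| ≤ (E * (q * KV + 2 * C) * c + q * FK κ V G x) * dist x x' := by
  set d := dist x x'
  have hE : IsBoundedMeasurable fun y => Real.exp (V y) :=
    .exp hV.continuous.measurable hVE
  have hE0 : 0 ≤ E := (Real.exp_pos _).le.trans (hVE x)
  have hc0 : 0 ≤ c := (abs_nonneg _).trans (hhc x)
  set g : X → ℝ := fun y => Real.exp (V y) * (G y * (q * d)) + E * (KV * (q * d)) * c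
  have hg0 (y : X) : 0 ≤ g y := by have := hG0 y; positivity
  have hGint : Integrable (fun y => Real.exp (V y) * (G y * (q * d))) (κ x) :=
    (hE.mul (hG.mul (.const _))).integrable _
  have hgint : Integrable g (κ x) := hGint.add (integrable_const _)
  have hbad : P.real {ω | q * d < dist (R x x' ω) (R' x x' ω)} ≤ C * d :=
    ENNReal.toReal_le_of_le_ofReal (by positivity) (hR.measure_lt_dist_le x x')
  have hcoupled := abs_integral_map_sub_integral_map_le (hR.measurable_left x x')
    (hR.measurable_right x x') (hE.measurable.mul hh)
    (fun y => abs_exp_mul_le (hVE y) (hhc y)) (by rwa [hR.map_left]) hg0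
    (s := {ω | q * d < dist (R x x' ω) (R' x x' ω)}) fun ω hω =>
      abs_exp_mul_sub_exp_mul_le_of_dist_le hV hVE hhc hG0 hslope (not_lt.1 hω)
  rw [hR.map_left, hR.map_right] at hcoupled
  calc |FK κ V h x - FK κ V h x'| ≤ ∫ y, g y ∂(κ x) + C * d * (2 * (E * c)) :=
        hcoupled.trans (by gcongr)
    _ = FK κ V G x * (q * d) + E * (KV * (q * d)) * c + C * d * (2 * (E * c)) := by
        simp only [g]
        rw [integral_add hGint (integrable_const _)]
        simp only [← mul_assoc (Real.exp _) (G _), integral_mul_const, integral_const,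
          probReal_univ, one_smul, FK]
    _ = (E * (q * KV + 2 * C) * c + q * FK κ V G x) * d := by ring

lemma abs_FK_sub_FK_le_mul_of_one_add_mul_FK_le {W : X → ℝ} (hW : IsBoundedMeasurable W)
    (hW0 : ∀ y, 0 ≤ W y) {l : ℝ} (hl : 0 < l) (hlW : ∀ y, 1 + q / l * FK κ V W y ≤ W y)
    {h : X → ℝ} {s t : ℝ} (hh : Measurable h) (hhs : ∀ y, |h y| ≤ s) (ht : 0 ≤ t)
    (hst : E * (q * KV + 2 * C) * s ≤ l * t)
    (hslope : ∀ y y', |h y - h y'| ≤ t * W y * dist y y') (x x' : X) :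
    |FK κ V h x - FK κ V h x'| ≤ l * t * W x * dist x x' := by
  refine (abs_FK_sub_FK_le hR hq hC hV hVE hh hhs ((IsBoundedMeasurable.const t).mul hW)
    (fun y => mul_nonneg ht (hW0 y)) hslope x x').trans ?_
  gcongr
  calc E * (q * KV + 2 * C) * s + q * FK κ V (fun y => t * W y) x
      ≤ l * t + q * (t * FK κ V W x) := by rw [FK_const_mul]; gcongr
    _ = l * t * (1 + q / l * FK κ V W x) := by field_simp
    _ ≤ l * t * W x := by gcongr; exact hlW x

lemma abs_FKiter_sub_FKiter_le (hpos : 0 < growthRate κ V) {W : X → ℝ}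
    (hW : IsBoundedMeasurable W) (hW0 : ∀ y, 0 ≤ W y)
    (hlW : ∀ y, 1 + q / growthRate κ V * FK κ V W y ≤ W y) {f : X → ℝ} {Kf : ℝ≥0}
    (hf : LipschitzWith Kf f) (hfb : ∃ b, ∀ y, |f y| ≤ b) {c : ℝ} (hLc : lipConst f ≤ c)
    (hsc : E * (q * KV + 2 * C) * supNorm f ≤ growthRate κ V * c) (n : ℕ) (x x' : X) :
    |FKiter κ V n f x - FKiter κ V n f x'|
      ≤ c * growthRate κ V ^ n * maxRescaledSupNorm κ V n * W x * dist x x' := by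
  have : Nonempty X := ⟨x⟩
  have hE := IsBoundedMeasurable.exp hV.continuous.measurable hVE
  have hc0 : 0 ≤ c := (lipConst_nonneg f).trans hLc
  have hM (n : ℕ) : 1 ≤ maxRescaledSupNorm κ V n := one_le_maxRescaledSupNorm κ V n
  have hM0 (n : ℕ) : 0 ≤ maxRescaledSupNorm κ V n := zero_le_one.trans (hM n)
  induction n generalizing x x' with
  | zero =>
    have hW1 : 1 ≤ W x := (le_add_of_nonneg_right
      (mul_nonneg (by positivity) (FK_nonneg κ V hW0 x))).trans (hlW x)
    calc |f x - f x'| ≤ c * 1 * 1 * 1 * dist x x' := by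
          simpa using (abs_sub_le_lipConst_mul_dist hf x x').trans (by gcongr)
      _ ≤ c * growthRate κ V ^ 0 * maxRescaledSupNorm κ V 0 * W x * dist x x' := by
          rw [pow_zero]; gcongr; exacts [mul_nonneg (by positivity) (hM0 0), hM 0]
  | succ n ih =>
    set l := growthRate κ V
    have hsup : E * (q * KV + 2 * C) * (supNorm f * supNorm (FKiter κ V n 1))
        ≤ l * (c * l ^ n * maxRescaledSupNorm κ V n) :=
      calc E * (q * KV + 2 * C) * (supNorm f * supNorm (FKiter κ V n 1))
          = E * (q * KV + 2 * C) * supNorm f * supNorm (FKiter κ V n 1) := by ring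
        _ ≤ l * c * (l ^ n * maxRescaledSupNorm κ V n) := by
            gcongr
            exacts [supNorm_nonneg _, supNorm_FKiter_one_le hpos n]
        _ = l * (c * l ^ n * maxRescaledSupNorm κ V n) := by ring
    have hQf : IsBoundedMeasurable (FKiter κ V n f) :=
      isBoundedMeasurable_FKiter hE ⟨hf.continuous.measurable, hfb⟩ n
    calc |FKiter κ V (n + 1) f x - FKiter κ V (n + 1) f x'|
        ≤ l * (c * l ^ n * maxRescaledSupNorm κ V n) * W x * dist x x' :=
          abs_FK_sub_FK_le_mul_of_one_add_mul_FK_le hR hq hC hV hVE hW hW0 hpos hlW hQf.measurable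
            (abs_FKiter_le_supNorm_mul_supNorm hE hfb n)
            (mul_nonneg (by positivity) (hM0 n)) hsup ih x x'
      _ = c * l ^ (n + 1) * maxRescaledSupNorm κ V n * W x * dist x x' := by ring
      _ ≤ c * l ^ (n + 1) * maxRescaledSupNorm κ V (n + 1) * W x * dist x x' := by
          gcongr
          exacts [hW0 x, maxRescaledSupNorm_mono κ V n.le_succ]

end Coupling

open ProbabilityTheory in
theorem FK_lipschitz_vs_rescaled_sup_general
    {X Ω : Type*} [MetricSpace X] [MeasurableSpace X] [OpensMeasurableSpace X] [MeasurableSpace Ω]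
    {κ : Kernel X X} [IsMarkovKernel κ] {P : Measure Ω} [IsProbabilityMeasure P]
    {q : ℝ} (hq0 : 0 ≤ q) (hq1 : q < 1) {C : ℝ} (hC : 0 ≤ C) {R R' : X → X → Ω → X}
    (hR : IsContractingCoupling κ P q C R R')
    {V : X → ℝ} {KV : ℝ≥0} (hV : LipschitzWith KV V) (hVb : ∃ v, ∀ x, |V x| ≤ v) :
    ∃ CV : ℝ, ∀ (f : X → ℝ) (Kf : ℝ≥0), LipschitzWith Kf f → (∃ b, ∀ x, |f x| ≤ b) →
      ∀ (n : ℕ) (x x' : X),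
        |FKiter κ V n f x - FKiter κ V n f x'|
          ≤ CV * lipNorm f * growthRate κ V ^ n * maxRescaledSupNorm κ V n * dist x x' := by
  rcases isEmpty_or_nonempty X with hX | hX
  · exact ⟨0, fun _ _ _ _ _ x => isEmptyElim x⟩
  obtain ⟨v, hv⟩ := hVb
  have hVE (y : X) : Real.exp (V y) ≤ Real.exp v := Real.exp_le_exp.2 (abs_le.1 (hv y)).2
  have hVe (y : X) : Real.exp (-v) ≤ Real.exp (V y) := Real.exp_le_exp.2 (abs_le.1 (hv y)).1
  have hE := IsBoundedMeasurable.exp hV.continuous.measurable hVE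
  have hpos : 0 < growthRate κ V := growthRate_pos hE (Real.exp_pos _) hVe
  set l := growthRate κ V
  obtain ⟨W, hW, hW0, hlW⟩ := exists_one_add_mul_FK_le (κ := κ) hE (r := q / l) (by positivity)
    (by rwa [div_mul_cancel₀ q hpos.ne'])
  obtain ⟨w, hw⟩ := hW.exists_abs_le
  set B := Real.exp v * (q * KV + 2 * C)
  have hB : 0 ≤ B := by positivity
  refine ⟨(B / l + 1) * w, fun f Kf hf hfb n x x' => ?_⟩
  have hnorm : 0 ≤ lipNorm f := (supNorm_nonneg f).trans (supNorm_le_lipNorm f)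
  have hLc : lipConst f ≤ (B / l + 1) * lipNorm f :=
    (lipConst_le_lipNorm f).trans
      (le_mul_of_one_le_left hnorm (le_add_of_nonneg_left (by positivity)))
  have hsc : B * supNorm f ≤ l * ((B / l + 1) * lipNorm f) :=
    calc B * supNorm f ≤ (B + l) * lipNorm f := by
          gcongr
          exacts [supNorm_nonneg f, le_add_of_nonneg_right hpos.le, supNorm_le_lipNorm f]
      _ = l * ((B / l + 1) * lipNorm f) := by field_simp
  have hM0 : 0 ≤ maxRescaledSupNorm κ V n := zero_le_one.trans (one_le_maxRescaledSupNorm κ V n)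
  calc |FKiter κ V n f x - FKiter κ V n f x'|
      ≤ (B / l + 1) * lipNorm f * l ^ n * maxRescaledSupNorm κ V n * W x * dist x x' :=
        abs_FKiter_sub_FKiter_le hR hq0 hC hV hVE hpos hW hW0 hlW hf hfb hLc hsc n x x'
    _ ≤ (B / l + 1) * lipNorm f * l ^ n * maxRescaledSupNorm κ V n * w * dist x x' := by
        gcongr; exact (le_abs_self (W x)).trans (hw x)
    _ = (B / l + 1) * w * lipNorm f * l ^ n * maxRescaledSupNorm κ V n * dist x x' := by ring

/-- The Lipschitz constant of the Feynman–Kac semigroup is controlled by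
the rescaled supremum norms: `Lip(Q_n^V f) ≤ C_V·‖f‖_L·λ₁ⁿ·M_n` where
`λ₁ = inf_{n≥1} ‖Q_n^V 1‖_∞^{1/n}` and `M_n = max_{0≤k≤n} λ₁^{−k}·‖Q_k^V 1‖_∞`. -/
theorem FK_lipschitz_vs_rescaled_sup
    {X : Type*} [MetricSpace X] [CompactSpace X] [MeasurableSpace X] [BorelSpace X]
    (κ : X → Measure X) (hκmeas : Measurable κ)
    (hκprob : ∀ x, IsProbabilityMeasure (κ x))
    (hFeller : ∀ f : X → ℝ, Continuous f → Continuous fun x => ∫ y, f y ∂(κ x))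
    -- hypothesis (C): coupling
    {Ω₀ : Type*} [MeasurableSpace Ω₀] (P₀ : Measure Ω₀) [IsProbabilityMeasure P₀]
    (q : ℝ) (hq0 : 0 ≤ q) (hq1 : q < 1) (C : ℝ) (hC : 0 < C)
    (R R' : X → X → Ω₀ → X)
    (hRmeas : Measurable fun p : (X × X) × Ω₀ => R p.1.1 p.1.2 p.2)
    (hR'meas : Measurable fun p : (X × X) × Ω₀ => R' p.1.1 p.1.2 p.2)
    (hRlaw : ∀ x x' : X, Measure.map (R x x') P₀ = κ x)
    (hR'law : ∀ x x' : X, Measure.map (R' x x') P₀ = κ x')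
    (hcouple : ∀ x x' : X,
      P₀ {ω | q * dist x x' < dist (R x x' ω) (R' x x' ω)} ≤ ENNReal.ofReal (C * dist x x'))
    (V : X → ℝ) (KV : ℝ≥0) (hV : LipschitzWith KV V)
    (lam1 : ℝ)
    (hlam1 : lam1 = ⨅ n : {n : ℕ // 1 ≤ n}, supNorm (FKiter κ V (n : ℕ) 1) ^ (((n : ℕ) : ℝ)⁻¹))
    (M : ℕ → ℝ)
    (hM : ∀ n : ℕ, M n = ⨆ k : Fin (n + 1), lam1⁻¹ ^ (k : ℕ) * supNorm (FKiter κ V (k : ℕ) 1)) :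
    ∃ CV : ℝ, ∀ (f : X → ℝ) (Kf : ℝ≥0), LipschitzWith Kf f →
      ∀ (n : ℕ) (x x' : X),
        |FKiter κ V n f x - FKiter κ V n f x'|
          ≤ CV * lipNorm f * lam1 ^ n * M n * dist x x' := by
  have hbdd (g : X → ℝ) (hg : Continuous g) : ∃ b, ∀ x, |g x| ≤ b := by
    simpa using isCompact_univ.exists_bound_of_continuousOn hg.continuousOn
  have hR : IsContractingCoupling κ P₀ q C R R' :=
    ⟨fun x x' => hRmeas.comp (measurable_prodMk_left (x := (x, x'))),
      fun x x' => hR'meas.comp (measurable_prodMk_left (x := (x, x'))), hRlaw, hR'law, hcouple⟩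
  let K : ProbabilityTheory.Kernel X X := ⟨κ, hκmeas⟩
  have hK : ProbabilityTheory.IsMarkovKernel K := ⟨hκprob⟩
  obtain ⟨CV, hCV⟩ := FK_lipschitz_vs_rescaled_sup_general (κ := K) hq0 hq1 hC.le hR hV
    (hbdd V hV.continuous)
  refine ⟨CV, fun f Kf hf n x x' => ?_⟩
  rw [hM, hlam1]
  exact hCV f Kf hf (hbdd f hf.continuous) n x x'
end

section
/- Uniform Feller property of normalized Feynman–Kac averages: Assume hypotheses (I) and (C), let V : X → ℝ be Lipschitz continuous, and let f : X → ℝ be Lipschitz continuous with f(x) > 0 for all x ∈ X. Then the family of functions {Q_n^V f / ‖Q_n^V f‖_∞ : n ∈ ℕ} is uniformly equicontinuous: for every ε > 0 there exists δ > 0 such that for all n ∈ ℕ and all x, x' ∈ X with d(x,x') < δ, |Q_n^V f(x) − Q_n^V f(x')| < ε·‖Q_n^V f‖_∞. -/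
open MeasureTheory Filter Topology
open scoped ENNReal NNReal

/-!
Write `Q` for the Feynman–Kac operator and `a n = ‖Qⁿ 1‖`. The sequence `a` is submultiplicative, so
it has a growth rate `r` with `rⁿ ≤ a n`. The coupling gives a Doeblin–Fortet inequality for `Q`,
whose iteration bounds the Lipschitz constant of `Qⁿ g` by a multiple of
`a n + ∑_{k < n} qᵏ a k a (n - 1 - k)`. At a time `n` that is a record of `a n / rⁿ`, this sum is
`O(a n)`, because `q < 1` beats the subexponential growth of `a k / rᵏ`. Hence `Qⁿ 1` is at least
`a n / 2` on a ball of fixed radius, and irreducibility spreads this to `Q^(N+n) 1 ≥ c a n` on the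
whole space. Iterating the latter gives `c a n ≤ r^(N+n)`, so `a n / rⁿ` is bounded along its
records, hence bounded. Now every `n` is a record up to a constant factor, so `Qⁿ f` has Lipschitz
constant `O(a n)`, and `a n = O(‖Qⁿ f‖)` by irreducibility once more.
-/

/-! ### Growth rates of submultiplicative sequences -/

section GrowthRate

/-- `r` is the exponential growth rate of the sequence `a`, in the strong form available for
submultiplicative sequences: `r ^ n` is a lower bound of `a n` with constant `1`. -/
structure HasGrowthRate (a : ℕ → ℝ) (r : ℝ) : Prop where
  pos : 0 < r
  pow_le : ∀ n, r ^ n ≤ a n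
  isBigO : ∀ s, r < s → a =O[atTop] (s ^ ·)

namespace HasGrowthRate

variable {a : ℕ → ℝ} {r : ℝ}

theorem apply_pos (h : HasGrowthRate a r) (n : ℕ) : 0 < a n :=
  (pow_pos h.pos n).trans_le (h.pow_le n)

theorem exists_le_mul_pow (h : HasGrowthRate a r) {s : ℝ} (hs : r < s) :
    ∃ A, 0 < A ∧ ∀ n, a n ≤ A * s ^ n := by
  have hs₀ : 0 < s := h.pos.trans hs
  obtain ⟨A, hA, hle⟩ := Asymptotics.bound_of_isBigO_nat_atTop (h.isBigO s hs)
  refine ⟨A, hA, fun n => (le_abs_self _).trans ?_⟩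
  simpa [abs_of_pos hs₀] using hle (pow_pos hs₀ n).ne'

theorem le_pow_of_forall_pow_le (h : HasGrowthRate a r) {c : ℝ} {k : ℕ}
    (hc : ∀ j, c ^ j ≤ a (k * j)) : c ≤ r ^ k := by
  have le_of_lt_rate : ∀ s, r < s → c ≤ s ^ k := by
    intro s hs
    have hsk : 0 < s ^ k := pow_pos (h.pos.trans hs) k
    obtain ⟨A, -, hA⟩ := h.exists_le_mul_pow hs
    by_contra! hlt
    obtain ⟨j, hj⟩ := pow_unbounded_of_one_lt A ((one_lt_div hsk).2 hlt)
    rw [div_pow, lt_div_iff₀ (pow_pos hsk j), ← pow_mul] at hj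
    exact (hj.trans_le (hc j)).not_ge (hA _)
  exact ge_of_tendsto ((continuous_pow k).continuousWithinAt (s := Set.Ioi r) (x := r))
    (eventually_mem_nhdsWithin.mono le_of_lt_rate)

end HasGrowthRate

theorem exists_hasGrowthRate_of_submultiplicative {a : ℕ → ℝ} {ρ : ℝ} (hρ : 0 < ρ)
    (hlow : ∀ n, ρ ^ n ≤ a n) (hsub : ∀ m n, a (m + n) ≤ a m * a n) :
    ∃ r, HasGrowthRate a r := by
  have hpos : ∀ n, 0 < a n := fun n => (pow_pos hρ n).trans_le (hlow n)
  have hsubadd : Subadditive fun n => Real.log (a n) := fun m n => by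
    simpa [Real.log_mul (hpos m).ne' (hpos n).ne'] using Real.log_le_log (hpos _) (hsub m n)
  have hbdd : BddBelow (Set.range fun n : ℕ => Real.log (a n) / n) := by
    refine ⟨min (Real.log ρ) 0, Set.forall_mem_range.2 fun n => ?_⟩
    rcases n.eq_zero_or_pos with rfl | hn
    · simp
    · refine (min_le_left _ _).trans ((le_div_iff₀' (by positivity)).2 ?_)
      simpa using Real.log_le_log (by positivity) (hlow n)
  refine ⟨Real.exp hsubadd.lim, Real.exp_pos _, fun n => ?_, fun s hs => ?_⟩
  · rcases n.eq_zero_or_pos with rfl | hn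
    · simpa using one_le_of_le_mul_right₀ (hpos 0) (hsub 0 0)
    · rw [← Real.exp_nat_mul, ← Real.le_log_iff_exp_le (hpos n), ← le_div_iff₀' (by positivity)]
      exact hsubadd.lim_le_div hbdd hn.ne'
  · have hs₀ : 0 < s := (Real.exp_pos _).trans hs
    refine Asymptotics.IsBigO.of_bound 1 ?_
    have hlim_lt : hsubadd.lim < Real.log s := (Real.lt_log_iff_exp_lt hs₀).2 hs
    filter_upwards [(hsubadd.tendsto_lim hbdd).eventually_lt_const hlim_lt,
      eventually_gt_atTop 0] with n hn hn₀
    have hlog : Real.log (a n) ≤ Real.log (s ^ n) := by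
      rw [Real.log_pow, ← div_le_iff₀' (by positivity)]
      exact hn.le
    simpa [abs_of_pos (hpos n), abs_of_pos hs₀] using
      (Real.log_le_log_iff (hpos n) (pow_pos hs₀ n)).1 hlog

theorem forall_le_of_forall_record_le {α : Type*} [LinearOrder α] {u : ℕ → α} {b : α}
    (h : ∀ n, (∀ j ≤ n, u j ≤ u n) → u n ≤ b) (n : ℕ) : u n ≤ b := by
  obtain ⟨m, hm, hmax⟩ := Finset.exists_max_image (Finset.Iic n) u ⟨n, by simp⟩
  rw [Finset.mem_Iic] at hm
  exact (hmax n (by simp)).trans (h m fun j hj => hmax j (Finset.mem_Iic.2 (hj.trans hm)))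

theorem sum_range_pow_le_inv_one_sub {ρ : ℝ} (hρ₀ : 0 ≤ ρ) (hρ₁ : ρ < 1) (n : ℕ) :
    ∑ k ∈ Finset.range n, ρ ^ k ≤ (1 - ρ)⁻¹ := by
  rw [← tsum_geometric_of_lt_one hρ₀ hρ₁]
  exact (summable_geometric_of_lt_one hρ₀ hρ₁).sum_le_tsum _ fun k _ => pow_nonneg hρ₀ k

theorem sum_convolution_le {a : ℕ → ℝ} {r s q A b : ℝ} (ha : ∀ n, 0 < a n) (hr : 0 < r)
    (hs : 0 < s) (hq : 0 ≤ q) (hqs : q * s < r) (hA : 0 ≤ A) (has : ∀ n, a n ≤ A * s ^ n)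
    (hb : 0 ≤ b) {n : ℕ} (hrecord : ∀ j ≤ n, a j / r ^ j ≤ b * (a n / r ^ n)) :
    ∑ k ∈ Finset.range n, q ^ k * a k * a (n - 1 - k) ≤
      A / r * (1 - q * s / r)⁻¹ * b * a n := by
  have term_le : ∀ k < n,
      q ^ k * a k * a (n - 1 - k) ≤ (q * s / r) ^ k * (A / r * (b * a n)) := by
    intro k hk
    obtain ⟨m, rfl⟩ : ∃ m, n = k + 1 + m := ⟨n - 1 - k, by omega⟩
    have ham := ha m
    have record_le : r ^ (k + 1) * a m ≤ b * a (k + 1 + m) := by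
      have := hrecord m (by omega)
      rw [pow_add r (k + 1) m] at this
      field_simp at this
      linarith
    calc q ^ k * a k * a (k + 1 + m - 1 - k)
        = q ^ k * a k * a m := by rw [show k + 1 + m - 1 - k = m by omega]
      _ ≤ q ^ k * (A * s ^ k) * a m := by gcongr; exact has k
      _ = (q * s / r) ^ k * (A / r * (r ^ (k + 1) * a m)) := by
          rw [div_pow, mul_pow, pow_succ]
          field_simp
      _ ≤ (q * s / r) ^ k * (A / r * (b * a (k + 1 + m))) := by gcongr
  have han := ha n
  calc ∑ k ∈ Finset.range n, q ^ k * a k * a (n - 1 - k)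
      ≤ ∑ k ∈ Finset.range n, (q * s / r) ^ k * (A / r * (b * a n)) :=
        Finset.sum_le_sum fun k hk => term_le k (Finset.mem_range.1 hk)
    _ ≤ (1 - q * s / r)⁻¹ * (A / r * (b * a n)) := by
        rw [← Finset.sum_mul]
        gcongr
        exact sum_range_pow_le_inv_one_sub (by positivity) ((div_lt_one hr).2 hqs) n
    _ = A / r * (1 - q * s / r)⁻¹ * b * a n := by ring

theorem HasGrowthRate.exists_sum_convolution_le {a : ℕ → ℝ} {r q : ℝ} (h : HasGrowthRate a r)
    (hq₀ : 0 ≤ q) (hq₁ : q < 1) :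
    ∃ M, 0 ≤ M ∧ ∀ b, 0 ≤ b → ∀ n, (∀ j ≤ n, a j / r ^ j ≤ b * (a n / r ^ n)) →
      ∑ k ∈ Finset.range n, q ^ k * a k * a (n - 1 - k) ≤ M * b * a n := by
  have hr := h.pos
  obtain ⟨s, hrs, hqs⟩ : ∃ s, r < s ∧ q * s < r := by
    refine ⟨r * (2 / (1 + q)), lt_mul_of_one_lt_right hr ?_, ?_⟩
    · rw [one_lt_div (by positivity)]
      linarith
    · rw [← mul_div_assoc, ← mul_div_assoc, div_lt_iff₀ (by positivity)]
      nlinarith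
  obtain ⟨A, hA, has⟩ := h.exists_le_mul_pow hrs
  have hρ : 0 < 1 - q * s / r := sub_pos.2 ((div_lt_one hr).2 hqs)
  exact ⟨A / r * (1 - q * s / r)⁻¹, by positivity, fun b hb n hrecord =>
    sum_convolution_le h.apply_pos hr (hr.trans hrs) hq₀ hqs hA.le has hb hrecord⟩

end GrowthRate

/-! ### Lipschitz gauges and monotone operators on `C(X, ℝ)` -/

section LipschitzGauge

variable {X : Type*} [PseudoMetricSpace X] {D g W : X → ℝ} {K : ℝ≥0}

/-- `D` is a Lipschitz gauge for `g`: a nonnegative function that serves as a Lipschitz constant of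
`g` depending on one of the two points. Unlike a Lipschitz constant, it can be transported by a
positive operator. -/
structure IsLipschitzGauge (D g : X → ℝ) : Prop where
  nonneg : ∀ x, 0 ≤ D x
  abs_sub_le : ∀ x y, |g x - g y| ≤ D x * dist x y

theorem isLipschitzGauge_of_lipschitzWith (hg : LipschitzWith K g) :
    IsLipschitzGauge (fun _ => (K : ℝ)) g :=
  ⟨fun _ => K.2, fun x y => by simpa only [Real.dist_eq] using hg.dist_le_mul x y⟩

theorem IsLipschitzGauge.mul_left (h : IsLipschitzGauge D g) (hW₀ : 0 ≤ W)
    (hW : LipschitzWith K W) {M : ℝ} (hM : ∀ x, |g x| ≤ M) :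
    IsLipschitzGauge (W * D + (K * M) • 1) (W * g) := by
  refine ⟨fun x => ?_, fun x y => ?_⟩
  · have hM₀ : 0 ≤ K * M := mul_nonneg K.2 ((abs_nonneg _).trans (hM x))
    simpa using add_nonneg (mul_nonneg (hW₀ x) (h.nonneg x)) hM₀
  · calc |W x * g x - W y * g y|
        = |W x * (g x - g y) + (W x - W y) * g y| := by ring_nf
      _ ≤ |W x * (g x - g y)| + |(W x - W y) * g y| := abs_add_le _ _
      _ = W x * |g x - g y| + |W x - W y| * |g y| := by
          rw [abs_mul, abs_mul, abs_of_nonneg (hW₀ x)]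
      _ ≤ W x * (D x * dist x y) + K * dist x y * M := by
          gcongr
          · exact hW₀ x
          · exact h.abs_sub_le x y
          · simpa only [Real.dist_eq] using hW.dist_le_mul x y
          · exact hM y
      _ = (W x * D x + K * M * 1) * dist x y := by ring

end LipschitzGauge

section MonotoneEnd

section Semiring

variable {R E : Type*} [Semiring R] [AddCommMonoid E] [Preorder E] [Module R E]
  {T : Module.End R E}

theorem monotone_end_pow (hT : Monotone T) (n : ℕ) : Monotone (T ^ n) := by
  rw [Module.End.coe_pow]
  exact hT.iterate n

theorem end_pow_apply_nonneg (hT : Monotone T) (n : ℕ) {e : E} (he : 0 ≤ e) : 0 ≤ (T ^ n) e := by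
  simpa only [map_zero] using monotone_end_pow hT n he

end Semiring

variable {R E : Type*} [CommSemiring R] [PartialOrder R] [IsOrderedRing R] [AddCommMonoid E]
  [Preorder E] [Module R E] [PosSMulMono R E] {S T : Module.End R E} {c : R}

theorem pow_smul_le_end_pow_apply (hT : Monotone T) (hc : 0 ≤ c) {e : E} (h : c • e ≤ T e)
    (n : ℕ) : c ^ n • e ≤ (T ^ n) e := by
  induction n with
  | zero => simp
  | succ n ih =>
    calc c ^ (n + 1) • e = c ^ n • c • e := by rw [pow_succ, mul_smul]
      _ ≤ c ^ n • T e := smul_le_smul_of_nonneg_left h (pow_nonneg hc n)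
      _ = T (c ^ n • e) := (map_smul T _ e).symm
      _ ≤ T ((T ^ n) e) := hT ih
      _ = (T ^ (n + 1)) e := by rw [pow_succ', Module.End.mul_apply]

theorem pow_smul_end_pow_apply_le (hS : Monotone S) (hT : Monotone T) (hc : 0 ≤ c)
    (h : ∀ e, 0 ≤ e → c • S e ≤ T e) (n : ℕ) {e : E} (he : 0 ≤ e) :
    c ^ n • (S ^ n) e ≤ (T ^ n) e := by
  induction n with
  | zero => simp
  | succ n ih =>
    have hSe : 0 ≤ (S ^ n) e := end_pow_apply_nonneg hS n he
    calc c ^ (n + 1) • (S ^ (n + 1)) e = c ^ n • c • S ((S ^ n) e) := by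
          rw [pow_succ, mul_smul, pow_succ', Module.End.mul_apply]
      _ ≤ c ^ n • T ((S ^ n) e) := smul_le_smul_of_nonneg_left (h _ hSe) (pow_nonneg hc n)
      _ = T (c ^ n • (S ^ n) e) := (map_smul T _ _).symm
      _ ≤ T ((T ^ n) e) := hT ih
      _ = (T ^ (n + 1)) e := by rw [pow_succ', Module.End.mul_apply]

end MonotoneEnd

section SupNorm

variable {X : Type*} [TopologicalSpace X] [CompactSpace X] {T : Module.End ℝ C(X, ℝ)}

theorem abs_apply_le_norm_mul_apply_one (hT : Monotone T) (g : C(X, ℝ)) (x : X) :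
    |T g x| ≤ ‖g‖ * T 1 x := by
  have hle : g ≤ ‖g‖ • 1 := fun y => by simpa using g.apply_le_norm y
  have hge : -(‖g‖ • 1) ≤ g := fun y => by simpa using g.neg_norm_le_apply y
  rw [abs_le]
  exact ⟨by simpa using hT hge x, by simpa using hT hle x⟩

theorem norm_apply_le_norm_mul_norm_apply_one (hT : Monotone T) (g : C(X, ℝ)) :
    ‖T g‖ ≤ ‖g‖ * ‖T 1‖ :=
  (ContinuousMap.norm_le _ (by positivity)).2 fun x =>
    (abs_apply_le_norm_mul_apply_one hT g x).trans <| by gcongr; exact (T 1).apply_le_norm x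

theorem norm_end_pow_add_apply_one_le (hT : Monotone T) (m n : ℕ) :
    ‖(T ^ (m + n)) 1‖ ≤ ‖(T ^ m) 1‖ * ‖(T ^ n) 1‖ := by
  rw [pow_add, Module.End.mul_apply, mul_comm ‖(T ^ m) 1‖]
  exact norm_apply_le_norm_mul_norm_apply_one (monotone_end_pow hT m) _

theorem le_norm_of_smul_one_le [Nonempty X] {c : ℝ} {g : C(X, ℝ)} (h : c • 1 ≤ g) : c ≤ ‖g‖ := by
  obtain ⟨x⟩ := ‹Nonempty X›
  simpa using (h x).trans (g.apply_le_norm x)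

theorem exists_apply_eq_norm_of_nonneg [Nonempty X] {g : C(X, ℝ)} (hg : 0 ≤ g) :
    ∃ x, g x = ‖g‖ := by
  obtain ⟨x, -, hx⟩ := isCompact_univ.exists_isMaxOn Set.univ_nonempty g.continuous.continuousOn
  refine ⟨x, (g.apply_le_norm x).antisymm ((ContinuousMap.norm_le _ (hg x)).2 fun y => ?_)⟩
  exact (Real.norm_of_nonneg (hg y)).trans_le (hx (Set.mem_univ y))

theorem exists_pos_smul_one_le {g : C(X, ℝ)} (hg : ∀ x, 0 < g x) : ∃ c : ℝ, 0 < c ∧ c • 1 ≤ g := by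
  obtain ⟨c, hc, hle⟩ := isCompact_univ.exists_forall_le' g.continuous.continuousOn fun x _ => hg x
  exact ⟨c, hc, fun x => by simpa using hle x (Set.mem_univ x)⟩

end SupNorm

/-! ### The Doeblin–Fortet inequality and irreducibility -/

section DoeblinFortet

variable {X : Type*} [PseudoMetricSpace X] [CompactSpace X] {Q : Module.End ℝ C(X, ℝ)}
  {q K r : ℝ}

/-- The Doeblin–Fortet (or Lasota–Yorke) inequality for an operator on `C(X, ℝ)`, with contraction
factor `q` and error constant `K`, in a pointwise form expressed through Lipschitz gauges. -/
def DoeblinFortet (Q : Module.End ℝ C(X, ℝ)) (q K : ℝ) : Prop :=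
  ∀ D g : C(X, ℝ), IsLipschitzGauge D g → IsLipschitzGauge (q • Q D + (K * ‖g‖) • 1 : C(X, ℝ)) (Q g)

theorem DoeblinFortet.isLipschitzGauge_pow (hQ : DoeblinFortet Q q K) {D g : C(X, ℝ)}
    (h : IsLipschitzGauge D g) (n : ℕ) :
    IsLipschitzGauge
      ((q ^ n • (Q ^ n) D +
        K • ∑ k ∈ Finset.range n, (q ^ k * ‖(Q ^ (n - 1 - k)) g‖) • (Q ^ k) 1 : C(X, ℝ)))
      ((Q ^ n) g) := by
  induction n with
  | zero => simpa using h
  | succ n ih =>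
    have gauge_succ :
        q ^ (n + 1) • (Q ^ (n + 1)) D +
          K • ∑ k ∈ Finset.range (n + 1), (q ^ k * ‖(Q ^ (n + 1 - 1 - k)) g‖) • (Q ^ k) 1 =
        q • Q (q ^ n • (Q ^ n) D +
          K • ∑ k ∈ Finset.range n, (q ^ k * ‖(Q ^ (n - 1 - k)) g‖) • (Q ^ k) 1) +
        (K * ‖(Q ^ n) g‖) • 1 := by
      rw [Finset.sum_range_succ']
      simp only [map_add, map_smul, map_sum, smul_add, Finset.smul_sum, smul_smul, pow_succ',
        Module.End.mul_apply, pow_zero, Module.End.one_apply, one_mul, Nat.add_sub_cancel,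
        Nat.sub_zero, Nat.sub_sub, add_comm 1, add_assoc, mul_assoc, mul_left_comm K q]
    rw [gauge_succ, pow_succ', Module.End.mul_apply]
    exact hQ _ _ ih

theorem DoeblinFortet.abs_pow_apply_sub_le (hQ : DoeblinFortet Q q K) (hmono : Monotone Q)
    (hq₀ : 0 ≤ q) (hq₁ : q ≤ 1) (hK : 0 ≤ K) {g : C(X, ℝ)} {L : ℝ≥0} (hg : LipschitzWith L g)
    (n : ℕ) (x y : X) :
    |(Q ^ n) g x - (Q ^ n) g y| ≤ (L * ‖(Q ^ n) 1‖ +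
      K * ‖g‖ * ∑ k ∈ Finset.range n, q ^ k * ‖(Q ^ k) 1‖ * ‖(Q ^ (n - 1 - k)) 1‖) * dist x y := by
  have gauge : IsLipschitzGauge ((L : ℝ) • 1 : C(X, ℝ)) g := by
    convert isLipschitzGauge_of_lipschitzWith hg using 1
    ext
    simp
  have nonneg : ∀ k, 0 ≤ (Q ^ k) 1 x := fun k => end_pow_apply_nonneg hmono k zero_le_one x
  have le_norm : ∀ k, (Q ^ k) 1 x ≤ ‖(Q ^ k) 1‖ := fun k => ContinuousMap.apply_le_norm _ x
  have initial_le : q ^ n * (L * (Q ^ n) 1 x) ≤ L * ‖(Q ^ n) 1‖ := by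
    have := nonneg n
    exact (mul_le_of_le_one_left (by positivity) (pow_le_one₀ hq₀ hq₁)).trans
      (mul_le_mul_of_nonneg_left (le_norm n) L.2)
  have error_le : ∀ k, q ^ k * ‖(Q ^ (n - 1 - k)) g‖ * (Q ^ k) 1 x ≤
      ‖g‖ * (q ^ k * ‖(Q ^ k) 1‖ * ‖(Q ^ (n - 1 - k)) 1‖) := fun k =>
    calc q ^ k * ‖(Q ^ (n - 1 - k)) g‖ * (Q ^ k) 1 x
        ≤ q ^ k * (‖g‖ * ‖(Q ^ (n - 1 - k)) 1‖) * ‖(Q ^ k) 1‖ := by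
          gcongr
          · exact nonneg k
          · exact norm_apply_le_norm_mul_norm_apply_one (monotone_end_pow hmono _) g
          · exact le_norm k
      _ = ‖g‖ * (q ^ k * ‖(Q ^ k) 1‖ * ‖(Q ^ (n - 1 - k)) 1‖) := by ring
  refine ((hQ.isLipschitzGauge_pow gauge n).abs_sub_le x y).trans ?_
  gcongr ?_ * _
  simp only [map_smul, ContinuousMap.add_apply, ContinuousMap.smul_apply, ContinuousMap.sum_apply,
    smul_eq_mul]
  rw [mul_assoc K ‖g‖, Finset.mul_sum (a := ‖g‖)]
  exact add_le_add initial_le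
    (mul_le_mul_of_nonneg_left (Finset.sum_le_sum fun k _ => error_le k) hK)

theorem DoeblinFortet.exists_abs_pow_apply_sub_le_of_record (hQ : DoeblinFortet Q q K)
    (hmono : Monotone Q) (hq₀ : 0 ≤ q) (hq₁ : q < 1) (hK : 0 ≤ K)
    (hr : HasGrowthRate (fun n => ‖(Q ^ n) 1‖) r) :
    ∃ M, 0 ≤ M ∧ ∀ b, 0 ≤ b → ∀ n,
      (∀ j ≤ n, ‖(Q ^ j) 1‖ / r ^ j ≤ b * (‖(Q ^ n) 1‖ / r ^ n)) →
      ∀ (g : C(X, ℝ)) (L : ℝ≥0), LipschitzWith L g → ∀ x y,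
        |(Q ^ n) g x - (Q ^ n) g y| ≤ (L + M * b * ‖g‖) * ‖(Q ^ n) 1‖ * dist x y := by
  obtain ⟨M, hM, hsum⟩ := hr.exists_sum_convolution_le hq₀ hq₁
  refine ⟨K * M, mul_nonneg hK hM, fun b hb n hrecord g L hg x y => ?_⟩
  calc |(Q ^ n) g x - (Q ^ n) g y|
      ≤ (L * ‖(Q ^ n) 1‖ + K * ‖g‖ *
          ∑ k ∈ Finset.range n, q ^ k * ‖(Q ^ k) 1‖ * ‖(Q ^ (n - 1 - k)) 1‖) * dist x y :=
        hQ.abs_pow_apply_sub_le hmono hq₀ hq₁.le hK hg n x y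
    _ ≤ (L * ‖(Q ^ n) 1‖ + K * ‖g‖ * (M * b * ‖(Q ^ n) 1‖)) * dist x y := by
        gcongr
        exact hsum b hb n hrecord
    _ = (L + K * M * b * ‖g‖) * ‖(Q ^ n) 1‖ * dist x y := by ring

end DoeblinFortet

section Irreducible

variable {X : Type*} [PseudoMetricSpace X] [CompactSpace X] {Q : Module.End ℝ C(X, ℝ)}
  {q K r : ℝ}

/-- An operator on `C(X, ℝ)` is uniformly irreducible if, for every radius `ε`, some power of it
spreads mass sitting on any `ε`-ball over the whole space, with a uniform loss factor `c`. -/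
def UniformlyIrreducible (Q : Module.End ℝ C(X, ℝ)) : Prop :=
  ∀ ε > 0, ∃ N : ℕ, ∃ c > 0, ∀ g : C(X, ℝ), 0 ≤ g → ∀ m, 0 ≤ m → ∀ y,
    (∀ z ∈ Metric.ball y ε, m ≤ g z) → (c * m) • 1 ≤ (Q ^ N) g

theorem UniformlyIrreducible.exists_smul_one_le_pow_apply (hQ : UniformlyIrreducible Q) {L : ℝ}
    (hL : 0 ≤ L) :
    ∃ N : ℕ, ∃ c > 0, ∀ g : C(X, ℝ), 0 ≤ g → (∀ x y, |g x - g y| ≤ L * ‖g‖ * dist x y) →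
      (c * ‖g‖) • 1 ≤ (Q ^ N) g := by
  obtain ⟨N, c, hc, hspread⟩ := hQ (1 / (2 * (L + 1))) (by positivity)
  refine ⟨N, c / 2, by positivity, fun g hg hlip x => ?_⟩
  have : Nonempty X := ⟨x⟩
  obtain ⟨y, hy⟩ := exists_apply_eq_norm_of_nonneg hg
  have half_le : ∀ z ∈ Metric.ball y (1 / (2 * (L + 1))), ‖g‖ / 2 ≤ g z := by
    intro z hz
    rw [Metric.mem_ball'] at hz
    have hosc : |g y - g z| ≤ ‖g‖ / 2 :=
      calc |g y - g z| ≤ L * ‖g‖ * dist y z := hlip y z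
        _ ≤ (L + 1) * ‖g‖ * (1 / (2 * (L + 1))) := by gcongr; linarith
        _ = ‖g‖ / 2 := by field_simp
    linarith [le_abs_self (g y - g z)]
  convert hspread g hg (‖g‖ / 2) (by positivity) y half_le x using 3
  ring

theorem UniformlyIrreducible.exists_mul_norm_pow_one_le_norm_pow_apply
    (hQ : UniformlyIrreducible Q) (hmono : Monotone Q) (hpos : ∀ n, 0 < ‖(Q ^ n) 1‖) {f : C(X, ℝ)}
    (hf₀ : 0 ≤ f) (hf : f ≠ 0) {L : ℝ≥0} (hfL : LipschitzWith L f) :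
    ∃ c > 0, ∀ n, c * ‖(Q ^ n) 1‖ ≤ ‖(Q ^ n) f‖ := by
  have hnorm : 0 < ‖f‖ := norm_pos_iff.2 hf
  obtain ⟨N, c, hc, hlow⟩ := hQ.exists_smul_one_le_pow_apply (L := L / ‖f‖) (by positivity)
  have hlow_f : (c * ‖f‖) • 1 ≤ (Q ^ N) f := hlow f hf₀ fun x y => by
    simpa [div_mul_cancel₀ _ hnorm.ne', Real.dist_eq] using hfL.dist_le_mul x y
  refine ⟨c * ‖f‖ / ‖(Q ^ N) 1‖, div_pos (by positivity) (hpos N), fun n => ?_⟩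
  rw [div_mul_eq_mul_div, div_le_iff₀ (hpos N)]
  have hle : (c * ‖f‖) • (Q ^ n) 1 ≤ (Q ^ N) ((Q ^ n) f) := by
    simpa only [map_smul, ← Module.End.mul_apply, ← pow_add, add_comm n] using
      monotone_end_pow hmono n hlow_f
  have hone : 0 ≤ (Q ^ n) 1 := end_pow_apply_nonneg hmono n zero_le_one
  calc c * ‖f‖ * ‖(Q ^ n) 1‖ = ‖(c * ‖f‖) • (Q ^ n) 1‖ := by
        rw [norm_smul, Real.norm_of_nonneg (by positivity)]
    _ ≤ ‖(Q ^ N) ((Q ^ n) f)‖ := (ContinuousMap.norm_le _ (norm_nonneg _)).2 fun x => by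
        have hx : 0 ≤ ((c * ‖f‖) • (Q ^ n) 1) x := smul_nonneg (by positivity) hone x
        exact (Real.norm_of_nonneg hx).trans_le <| (hle x).trans (ContinuousMap.apply_le_norm _ x)
    _ ≤ ‖(Q ^ n) f‖ * ‖(Q ^ N) 1‖ :=
        norm_apply_le_norm_mul_norm_apply_one (monotone_end_pow hmono N) _

theorem exists_norm_pow_one_div_pow_le [Nonempty X] (hmono : Monotone Q) (hDF : DoeblinFortet Q q K)
    (hq₀ : 0 ≤ q) (hq₁ : q < 1) (hK : 0 ≤ K) (hirr : UniformlyIrreducible Q)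
    (hr : HasGrowthRate (fun n => ‖(Q ^ n) 1‖) r) :
    ∃ b, 0 ≤ b ∧ ∀ n, ‖(Q ^ n) 1‖ / r ^ n ≤ b := by
  obtain ⟨M, hM, hrecord_lip⟩ := hDF.exists_abs_pow_apply_sub_le_of_record hmono hq₀ hq₁ hK hr
  obtain ⟨N, c, hc, hlow⟩ := hirr.exists_smul_one_le_pow_apply (L := M * 1 * ‖(1 : C(X, ℝ))‖)
    (by positivity)
  have hr₀ := hr.pos
  refine ⟨r ^ N / c, by positivity, forall_le_of_forall_record_le fun n hrecord => ?_⟩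
  have hone : 0 ≤ (Q ^ n) 1 := end_pow_apply_nonneg hmono n zero_le_one
  have hle : (c * ‖(Q ^ n) 1‖) • 1 ≤ (Q ^ (N + n)) 1 := by
    rw [pow_add, Module.End.mul_apply]
    refine hlow _ hone fun x y => ?_
    simpa using hrecord_lip 1 zero_le_one n (by simpa using hrecord) 1 0 (LipschitzWith.const 1) x y
  have hpow : ∀ j, (c * ‖(Q ^ n) 1‖) ^ j ≤ ‖(Q ^ ((N + n) * j)) 1‖ := fun j => by
    rw [pow_mul]
    exact le_norm_of_smul_one_le
      (pow_smul_le_end_pow_apply (monotone_end_pow hmono _) (by positivity) hle j)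
  have hle_rate : c * ‖(Q ^ n) 1‖ ≤ r ^ (N + n) := hr.le_pow_of_forall_pow_le hpow
  rw [div_le_div_iff₀ (by positivity) hc, ← pow_add, mul_comm]
  exact hle_rate

theorem exists_abs_pow_apply_sub_le_mul_norm_pow_one [Nonempty X] (hmono : Monotone Q)
    (hDF : DoeblinFortet Q q K) (hq₀ : 0 ≤ q) (hq₁ : q < 1) (hK : 0 ≤ K)
    (hirr : UniformlyIrreducible Q) (hr : HasGrowthRate (fun n => ‖(Q ^ n) 1‖) r) :
    ∃ M, 0 ≤ M ∧ ∀ (g : C(X, ℝ)) (L : ℝ≥0), LipschitzWith L g → ∀ n x y,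
      |(Q ^ n) g x - (Q ^ n) g y| ≤ (L + M * ‖g‖) * ‖(Q ^ n) 1‖ * dist x y := by
  obtain ⟨M, hM, hlip⟩ := hDF.exists_abs_pow_apply_sub_le_of_record hmono hq₀ hq₁ hK hr
  obtain ⟨b, hb, hle⟩ := exists_norm_pow_one_div_pow_le hmono hDF hq₀ hq₁ hK hirr hr
  refine ⟨M * b, mul_nonneg hM hb, fun g L hg n => hlip b hb n (fun j _ => (hle j).trans ?_) g L hg⟩
  exact le_mul_of_one_le_right hb ((one_le_div (pow_pos hr.pos n)).2 (hr.pow_le n))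

theorem exists_abs_pow_apply_sub_le_mul_norm_pow_apply (hmono : Monotone Q)
    (hDF : DoeblinFortet Q q K) (hq₀ : 0 ≤ q) (hq₁ : q < 1) (hK : 0 ≤ K)
    (hirr : UniformlyIrreducible Q) {ρ : ℝ} (hρ : 0 < ρ) (hρQ : ρ • 1 ≤ Q 1) {f : C(X, ℝ)}
    (hf₀ : 0 ≤ f) (hf : f ≠ 0) {L : ℝ≥0} (hfL : LipschitzWith L f) :
    ∃ M, 0 ≤ M ∧ ∀ n, 0 < ‖(Q ^ n) f‖ ∧
      ∀ x y, |(Q ^ n) f x - (Q ^ n) f y| ≤ M * ‖(Q ^ n) f‖ * dist x y := by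
  obtain ⟨x₀, -⟩ := DFunLike.ne_iff.1 hf
  have : Nonempty X := ⟨x₀⟩
  obtain ⟨r, hr⟩ := exists_hasGrowthRate_of_submultiplicative hρ
    (fun n => le_norm_of_smul_one_le (pow_smul_le_end_pow_apply hmono hρ.le hρQ n))
    (norm_end_pow_add_apply_one_le hmono)
  obtain ⟨M, hM, hlip⟩ :=
    exists_abs_pow_apply_sub_le_mul_norm_pow_one hmono hDF hq₀ hq₁ hK hirr hr
  obtain ⟨c, hc, hlow⟩ :=
    hirr.exists_mul_norm_pow_one_le_norm_pow_apply hmono hr.apply_pos hf₀ hf hfL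
  refine ⟨(L + M * ‖f‖) / c, by positivity, fun n =>
    ⟨(mul_pos hc (hr.apply_pos n)).trans_le (hlow n), fun x y => (hlip f L hfL n x y).trans ?_⟩⟩
  rw [div_mul_eq_mul_div, mul_div_assoc]
  gcongr
  exact (le_div_iff₀' hc).2 (hlow n)

end Irreducible

/-! ### Feynman–Kac operators -/

section Measure

theorem integral_bind_eq_integral_integral {α β : Type*} [MeasurableSpace α] [MeasurableSpace β]
    {μ : Measure α} {κ : α → Measure β} (hκ : Measurable κ) {g : β → ℝ}
    (hg : Integrable g (μ.bind κ)) : ∫ y, g y ∂μ.bind κ = ∫ x, ∫ y, g y ∂κ x ∂μ :=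
  ProbabilityTheory.Kernel.integral_comp (η := ⟨κ, hκ⟩)
    (κ := ProbabilityTheory.Kernel.const Unit μ) (a := ()) hg

theorem isProbabilityMeasure_kIter {X : Type*} [MeasurableSpace X] {κ : X → Measure X}
    [∀ x, IsProbabilityMeasure (κ x)] (hκ : Measurable κ) (n : ℕ) (x : X) :
    IsProbabilityMeasure (kIter κ n x) := by
  induction n with
  | zero => exact Measure.dirac.isProbabilityMeasure
  | succ n ih => exact isProbabilityMeasure_bind hκ.aemeasurable (ae_of_all _ inferInstance)

theorem integrable_of_compactSpace {X : Type*} [TopologicalSpace X] [CompactSpace X]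
    [MeasurableSpace X] [OpensMeasurableSpace X] (g : C(X, ℝ)) (μ : Measure X)
    [IsFiniteMeasure μ] : Integrable g μ :=
  g.continuous.integrable_of_hasCompactSupport (HasCompactSupport.of_compactSpace g)

theorem supNorm_coe_eq_norm {X : Type*} [TopologicalSpace X] [CompactSpace X] (g : C(X, ℝ)) :
    supNorm g = ‖g‖ :=
  g.norm_eq_iSup_norm.symm

end Measure

section KernelOp

/-- The Feller property: integration against the kernel `κ` preserves continuity. -/
def IsFeller {X : Type*} [TopologicalSpace X] [MeasurableSpace X] (κ : X → Measure X) : Prop :=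
  ∀ f : X → ℝ, Continuous f → Continuous fun x => ∫ y, f y ∂κ x

variable {X : Type*} [TopologicalSpace X] [CompactSpace X] [MeasurableSpace X] [BorelSpace X]
  {κ : X → Measure X} {W : C(X, ℝ)}

/-- The operator `g ↦ (x ↦ ∫ W g dκ(x))` on `C(X, ℝ)`. It is the Markov operator of `κ` for
`W = 1`, and the Feynman–Kac operator with potential `V` for `W = exp ∘ V`. -/
noncomputable def kernelOp [∀ x, IsFiniteMeasure (κ x)] (hκ : IsFeller κ) (W : C(X, ℝ)) :
    Module.End ℝ C(X, ℝ) where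
  toFun g := ⟨fun x => ∫ y, W y * g y ∂κ x, hκ _ (by fun_prop)⟩
  map_add' g h := by
    ext x
    simpa [mul_add] using integral_add (integrable_of_compactSpace (W * g) (κ x))
      (integrable_of_compactSpace (W * h) (κ x))
  map_smul' c g := by
    ext x
    simp [mul_left_comm _ c, integral_const_mul]

section Finite

variable [∀ x, IsFiniteMeasure (κ x)]

theorem kernelOp_apply (hκ : IsFeller κ) (g : C(X, ℝ)) (x : X) :
    kernelOp hκ W g x = ∫ y, W y * g y ∂κ x :=
  rfl

theorem kernelOp_monotone (hκ : IsFeller κ) (hW : 0 ≤ W) : Monotone (kernelOp hκ W) :=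
  fun g h hgh x => integral_mono (integrable_of_compactSpace (W * g) (κ x))
    (integrable_of_compactSpace (W * h) (κ x)) fun y => mul_le_mul_of_nonneg_left (hgh y) (hW y)

theorem smul_kernelOp_one_apply_le (hκ : IsFeller κ) {w : ℝ} (hw : w • 1 ≤ W) {g : C(X, ℝ)}
    (hg : 0 ≤ g) : w • kernelOp hκ 1 g ≤ kernelOp hκ W g := by
  intro x
  calc w * ∫ y, 1 * g y ∂κ x = ∫ y, w * g y ∂κ x := by simp only [one_mul, integral_const_mul]
    _ ≤ ∫ y, W y * g y ∂κ x :=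
        integral_mono (integrable_of_compactSpace (w • g) (κ x))
          (integrable_of_compactSpace (W * g) (κ x)) fun y => by
            simpa using mul_le_mul_of_nonneg_right (hw y) (hg y)

theorem coe_kernelOp_pow_apply (hκ : IsFeller κ) {V : X → ℝ} (hW : ∀ x, W x = Real.exp (V x))
    (n : ℕ) (g : C(X, ℝ)) : ⇑((kernelOp hκ W ^ n) g) = FKiter κ V n g := by
  induction n with
  | zero => rfl
  | succ n ih =>
    ext x
    simp only [pow_succ', Module.End.mul_apply, kernelOp_apply, ih, FKiter, FK, hW]

end Finite

section Probability

variable [∀ x, IsProbabilityMeasure (κ x)]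

theorem kernelOp_one_pow_apply (hκ : IsFeller κ) (hmeas : Measurable κ) (n : ℕ) (g : C(X, ℝ))
    (x : X) : (kernelOp hκ 1 ^ n) g x = ∫ y, g y ∂kIter κ n x := by
  induction n generalizing g with
  | zero => exact (integral_dirac' g x g.continuous.stronglyMeasurable).symm
  | succ n ih =>
    have := isProbabilityMeasure_kIter hmeas (n + 1) x
    rw [pow_succ, Module.End.mul_apply, ih, kIter,
      integral_bind_eq_integral_integral hmeas (integrable_of_compactSpace g (kIter κ (n + 1) x))]
    simp [kernelOp_apply]

theorem smul_one_le_kernelOp_one (hκ : IsFeller κ) {w : ℝ} (hw : w • 1 ≤ W) :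
    w • 1 ≤ kernelOp hκ W 1 := by
  have markov_one : kernelOp hκ 1 1 = 1 := by
    ext x
    simp [kernelOp_apply]
  simpa only [markov_one] using smul_kernelOp_one_apply_le hκ hw zero_le_one

end Probability

end KernelOp

section Coupling

variable {X : Type*} [PseudoMetricSpace X] [CompactSpace X] [MeasurableSpace X] [BorelSpace X]
  {κ : X → Measure X} {W : C(X, ℝ)} {q C : ℝ}

theorem uniformlyIrreducible_kernelOp [∀ x, IsProbabilityMeasure (κ x)] (hκ : IsFeller κ)
    (hmeas : Measurable κ) {w : ℝ} (hw₀ : 0 < w) (hw : w • 1 ≤ W)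
    (hI : ∀ ε : ℝ, 0 < ε → ∃ (N : ℕ) (p : ℝ≥0∞), 0 < p ∧
      ∀ x y : X, p < kIter κ N x (Metric.ball y ε)) :
    UniformlyIrreducible (kernelOp hκ W) := by
  intro ε hε
  obtain ⟨N, p, hp, hball⟩ := hI ε hε
  have hp' : 0 < (min p 1).toReal := ENNReal.toReal_pos (lt_min hp one_pos).ne' (by simp)
  refine ⟨N, w ^ N * (min p 1).toReal, by positivity, fun g hg m hm y hgm x => ?_⟩
  have := isProbabilityMeasure_kIter hmeas N x
  have hW : 0 ≤ W := (smul_nonneg hw₀.le zero_le_one).trans hw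
  have le_measure_ball : (min p 1).toReal ≤ (kIter κ N x).real (Metric.ball y ε) :=
    ENNReal.toReal_mono (measure_ne_top _ _) ((min_le_left _ _).trans (hball x y).le)
  calc ((w ^ N * (min p 1).toReal * m) • 1 : C(X, ℝ)) x
      = w ^ N * (m * (min p 1).toReal) := by simp; ring
    _ ≤ w ^ N * (m * (kIter κ N x).real {z | m ≤ g z}) := by
        gcongr
        exact le_measure_ball.trans (measureReal_mono hgm)
    _ ≤ w ^ N * ∫ z, g z ∂kIter κ N x := by
        gcongr
        exact mul_meas_ge_le_integral_of_nonneg (ae_of_all _ hg) (integrable_of_compactSpace g _) m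
    _ = (w ^ N • (kernelOp hκ 1 ^ N) g) x := by
        rw [ContinuousMap.smul_apply, kernelOp_one_pow_apply hκ hmeas, smul_eq_mul]
    _ ≤ (kernelOp hκ W ^ N) g x :=
        pow_smul_end_pow_apply_le (kernelOp_monotone hκ zero_le_one) (kernelOp_monotone hκ hW)
          hw₀.le (fun _ => smul_kernelOp_one_apply_le hκ hw) N hg x

/-- Hypothesis (C) in terms of the joint law `π` of the coupled pair: outside an event of
probability at most `C * dist x x'`, the coupling of `κ x` and `κ x'` contracts the distance by the
factor `q`. -/
def HasContractiveCoupling (κ : X → Measure X) (q C : ℝ) : Prop :=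
  ∀ x x', ∃ π : Measure (X × X), π.fst = κ x ∧ π.snd = κ x' ∧
    π.real {z | q * dist x x' < dist z.1 z.2} ≤ C * dist x x'

theorem hasContractiveCoupling_of_maps {Ω : Type*} [MeasurableSpace Ω] {P : Measure Ω}
    {R R' : X → X → Ω → X} (hC : 0 ≤ C) (hR : ∀ x x', Measurable (R x x'))
    (hR' : ∀ x x', Measurable (R' x x')) (hRlaw : ∀ x x', P.map (R x x') = κ x)
    (hR'law : ∀ x x', P.map (R' x x') = κ x')
    (hcouple : ∀ x x', P {ω | q * dist x x' < dist (R x x' ω) (R' x x' ω)} ≤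
      ENNReal.ofReal (C * dist x x')) :
    HasContractiveCoupling κ q C := by
  intro x x'
  refine ⟨P.map fun ω => (R x x' ω, R' x x' ω), ?_, ?_, ?_⟩
  · rw [Measure.fst_map_prodMk (hR' x x'), hRlaw]
  · rw [Measure.snd_map_prodMk (hR x x'), hR'law]
  · rw [map_measureReal_apply ((hR x x').prodMk (hR' x x'))
      (measurableSet_lt measurable_const measurable_dist)]
    exact ENNReal.toReal_le_of_le_ofReal (by positivity) (hcouple x x')

theorem IsLipschitzGauge.abs_integral_fst_sub_integral_snd_le {D g : C(X, ℝ)}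
    (h : IsLipschitzGauge D g) (π : Measure (X × X)) [IsFiniteMeasure π] {δ : ℝ}
    (hδ : 0 ≤ δ) :
    |∫ x, g x ∂π.fst - ∫ x, g x ∂π.snd| ≤
      δ * ∫ x, D x ∂π.fst + 2 * ‖g‖ * π.real {z | δ < dist z.1 z.2} := by
  set far := {z : X × X | δ < dist z.1 z.2}
  have hfar : MeasurableSet far := measurableSet_lt measurable_const measurable_dist
  have integrable_fst : ∀ u : C(X, ℝ), Integrable (fun z : X × X => u z.1) π := fun u =>
    (integrable_of_compactSpace u π.fst).comp_measurable measurable_fst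
  have integrable_snd : ∀ u : C(X, ℝ), Integrable (fun z : X × X => u z.2) π := fun u =>
    (integrable_of_compactSpace u π.snd).comp_measurable measurable_snd
  have integral_fst : ∀ u : C(X, ℝ), ∫ x, u x ∂π.fst = ∫ z, u z.1 ∂π := fun u =>
    integral_map measurable_fst.aemeasurable u.continuous.aestronglyMeasurable
  have integral_snd : ∀ u : C(X, ℝ), ∫ x, u x ∂π.snd = ∫ z, u z.2 ∂π := fun u =>
    integral_map measurable_snd.aemeasurable u.continuous.aestronglyMeasurable
  have integrable_indicator : Integrable (far.indicator fun _ => 2 * ‖g‖) π :=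
    (integrable_const _).indicator hfar
  have pointwise_le : ∀ z : X × X,
      |g z.1 - g z.2| ≤ δ * D z.1 + far.indicator (fun _ => 2 * ‖g‖) z := by
    intro z
    by_cases hz : z ∈ far
    · rw [Set.indicator_of_mem hz]
      have hdist : |g z.1 - g z.2| ≤ 2 * ‖g‖ := by
        simpa only [two_mul, Real.norm_eq_abs] using (norm_sub_le _ _).trans
          (add_le_add (g.norm_coe_le_norm z.1) (g.norm_coe_le_norm z.2))
      exact hdist.trans (le_add_of_nonneg_left (mul_nonneg hδ (h.nonneg _)))
    · rw [Set.indicator_of_notMem hz, add_zero, mul_comm]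
      exact (h.abs_sub_le _ _).trans (mul_le_mul_of_nonneg_left (not_lt.1 hz) (h.nonneg _))
  rw [integral_fst g, integral_snd g, integral_fst D, ← integral_sub (integrable_fst g)
    (integrable_snd g)]
  calc |∫ z, g z.1 - g z.2 ∂π| ≤ ∫ z, |g z.1 - g z.2| ∂π := abs_integral_le_integral_abs
    _ ≤ ∫ z, δ * D z.1 + far.indicator (fun _ => 2 * ‖g‖) z ∂π :=
        integral_mono ((integrable_fst g).sub (integrable_snd g)).abs
          (((integrable_fst D).const_mul δ).add integrable_indicator) pointwise_le
    _ = δ * ∫ z, D z.1 ∂π + 2 * ‖g‖ * π.real far := by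
        rw [integral_add ((integrable_fst D).const_mul δ) integrable_indicator, integral_const_mul,
          integral_indicator_const _ hfar, smul_eq_mul, mul_comm (π.real far)]

theorem doeblinFortet_kernelOp [∀ x, IsProbabilityMeasure (κ x)] (hκ : IsFeller κ)
    (hcouple : HasContractiveCoupling κ q C) (hW₀ : 0 ≤ W) {K : ℝ≥0} (hW : LipschitzWith K W)
    (hq : 0 ≤ q) (hC : 0 ≤ C) :
    DoeblinFortet (kernelOp hκ W) q (q * K + 2 * ‖W‖ * C) := by
  intro D g h
  have gauge_mul : IsLipschitzGauge (W * D + (K * ‖g‖) • 1 : C(X, ℝ)) (W * g : C(X, ℝ)) := by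
    simpa using h.mul_left hW₀ hW g.norm_coe_le_norm
  have integral_gauge : ∀ x,
      ∫ y, (W * D + (K * ‖g‖) • 1 : C(X, ℝ)) y ∂κ x = kernelOp hκ W D x + K * ‖g‖ := fun x => by
    have := integral_add (integrable_of_compactSpace (W * D) (κ x))
      (integrable_const (μ := κ x) (K * ‖g‖))
    simpa [kernelOp_apply] using this
  refine ⟨fun x => ?_, fun x x' => ?_⟩
  · have : 0 ≤ kernelOp hκ W D x := integral_nonneg fun y => mul_nonneg (hW₀ y) (h.nonneg y)
    simp only [ContinuousMap.add_apply, ContinuousMap.smul_apply, ContinuousMap.one_apply,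
      smul_eq_mul]
    positivity
  · obtain ⟨π, hfst, hsnd, hfar⟩ := hcouple x x'
    have : IsFiniteMeasure π := ⟨by rw [← Measure.fst_univ, hfst]; exact measure_lt_top _ _⟩
    have hle :=
      gauge_mul.abs_integral_fst_sub_integral_snd_le π (δ := q * dist x x') (by positivity)
    rw [hfst, hsnd, integral_gauge] at hle
    calc |kernelOp hκ W g x - kernelOp hκ W g x'|
        ≤ q * dist x x' * (kernelOp hκ W D x + K * ‖g‖) +
            2 * ‖W * g‖ * π.real {z | q * dist x x' < dist z.1 z.2} := hle
      _ ≤ q * dist x x' * (kernelOp hκ W D x + K * ‖g‖) +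
            2 * (‖W‖ * ‖g‖) * (C * dist x x') := by
          gcongr
          exact norm_mul_le W g
      _ = (q * kernelOp hκ W D x + (q * K + 2 * ‖W‖ * C) * ‖g‖ * 1) * dist x x' := by ring

end Coupling

theorem exists_lipschitzWith_exp_comp {X : Type*} [PseudoMetricSpace X] [CompactSpace X]
    {V : X → ℝ} (hV : LocallyLipschitz V) : ∃ K, LipschitzWith K fun x => Real.exp (V x) := by
  have hexp : LocallyLipschitz Real.exp :=
    Real.contDiff_exp.locallyLipschitz (𝕂 := ℝ)
  simpa only [lipschitzOnWith_univ, Function.comp_def] using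
    (hexp.comp hV).locallyLipschitzOn.exists_lipschitzOnWith_of_compact isCompact_univ

theorem exists_dist_lt_imp_abs_sub_lt_mul {ι X : Type*} [PseudoMetricSpace X] {u : ι → X → ℝ}
    {c : ι → ℝ} {M : ℝ} (hM : 0 ≤ M) (hc : ∀ i, 0 < c i)
    (hu : ∀ i x y, |u i x - u i y| ≤ M * c i * dist x y) {ε : ℝ} (hε : 0 < ε) :
    ∃ δ, 0 < δ ∧ ∀ i x y, dist x y < δ → |u i x - u i y| < ε * c i := by
  refine ⟨ε / (M + 1), by positivity, fun i x y hxy => ?_⟩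
  have hci := hc i
  calc |u i x - u i y| ≤ M * c i * dist x y := hu i x y
    _ ≤ (M + 1) * dist x y * c i := by
        rw [mul_right_comm]
        gcongr
        exact le_add_of_nonneg_right zero_le_one
    _ < ε * c i := by
        gcongr
        exact (lt_div_iff₀' (by positivity)).1 hxy

theorem FK_uniform_feller_general
    {X : Type*} [PseudoMetricSpace X] [CompactSpace X] [MeasurableSpace X] [BorelSpace X]
    (κ : X → Measure X) (hmeas : Measurable κ) [∀ x, IsProbabilityMeasure (κ x)]
    (hκ : IsFeller κ)
    (hI : ∀ ε : ℝ, 0 < ε → ∃ (N : ℕ) (p : ℝ≥0∞), 0 < p ∧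
      ∀ x y : X, p < kIter κ N x (Metric.ball y ε))
    {q C : ℝ} (hq₀ : 0 ≤ q) (hq₁ : q < 1) (hC : 0 ≤ C) (hcouple : HasContractiveCoupling κ q C)
    {V : X → ℝ} (hV : LocallyLipschitz V)
    {f : X → ℝ} {L : ℝ≥0} (hfL : LipschitzWith L f) (hf₀ : 0 ≤ f) (hf : f ≠ 0) :
    ∀ ε : ℝ, 0 < ε → ∃ δ : ℝ, 0 < δ ∧ ∀ (n : ℕ) (x x' : X), dist x x' < δ →
      |FKiter κ V n f x - FKiter κ V n f x'| < ε * supNorm (FKiter κ V n f) := by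
  obtain ⟨K, hW⟩ := exists_lipschitzWith_exp_comp hV
  let W : C(X, ℝ) := ⟨fun x => Real.exp (V x), hW.continuous⟩
  let g : C(X, ℝ) := ⟨f, hfL.continuous⟩
  have hW₀ : 0 ≤ W := fun x => (Real.exp_pos _).le
  obtain ⟨w, hw₀, hw⟩ := exists_pos_smul_one_le (g := W) fun x => Real.exp_pos _
  obtain ⟨M, hM, hlip⟩ := exists_abs_pow_apply_sub_le_mul_norm_pow_apply (f := g)
    (kernelOp_monotone hκ hW₀) (doeblinFortet_kernelOp hκ hcouple hW₀ hW hq₀ hC) hq₀ hq₁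
    (by positivity) (uniformlyIrreducible_kernelOp hκ hmeas hw₀ hw hI) hw₀
    (smul_one_le_kernelOp_one hκ hw) hf₀ (fun h => hf (congrArg DFunLike.coe h)) hfL
  have iter_eq : ∀ n, FKiter κ V n f = (kernelOp hκ W ^ n) g := fun n =>
    (coe_kernelOp_pow_apply hκ (fun _ => rfl) n g).symm
  simp only [iter_eq, supNorm_coe_eq_norm]
  exact fun ε hε =>
    exists_dist_lt_imp_abs_sub_lt_mul hM (fun n => (hlip n).1) (fun n => (hlip n).2) hε

/-- Uniform Feller property of normalized Feynman–Kac averages: for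
Lipschitz `V` and positive Lipschitz `f`, the family `{Q_n^V f / ‖Q_n^V f‖_∞}` is
uniformly equicontinuous. -/
theorem FK_uniform_feller
    {X : Type*} [MetricSpace X] [CompactSpace X] [MeasurableSpace X] [BorelSpace X]
    (κ : X → Measure X) (hκmeas : Measurable κ)
    (hκprob : ∀ x, IsProbabilityMeasure (κ x))
    (hFeller : ∀ f : X → ℝ, Continuous f → Continuous fun x => ∫ y, f y ∂(κ x))
    -- hypothesis (I): uniform irreducibility
    (hI : ∀ ε : ℝ, 0 < ε → ∃ (N : ℕ) (p : ℝ≥0∞), 0 < p ∧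
      ∀ x y : X, p < kIter κ N x (Metric.ball y ε))
    -- hypothesis (C): coupling
    {Ω₀ : Type*} [MeasurableSpace Ω₀] (P₀ : Measure Ω₀) [IsProbabilityMeasure P₀]
    (q : ℝ) (hq0 : 0 ≤ q) (hq1 : q < 1) (C : ℝ) (hC : 0 < C)
    (R R' : X → X → Ω₀ → X)
    (hRmeas : Measurable fun p : (X × X) × Ω₀ => R p.1.1 p.1.2 p.2)
    (hR'meas : Measurable fun p : (X × X) × Ω₀ => R' p.1.1 p.1.2 p.2)
    (hRlaw : ∀ x x' : X, Measure.map (R x x') P₀ = κ x)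
    (hR'law : ∀ x x' : X, Measure.map (R' x x') P₀ = κ x')
    (hcouple : ∀ x x' : X,
      P₀ {ω | q * dist x x' < dist (R x x' ω) (R' x x' ω)} ≤ ENNReal.ofReal (C * dist x x'))
    (V : X → ℝ) (KV : ℝ≥0) (hV : LipschitzWith KV V)
    (f : X → ℝ) (Kf : ℝ≥0) (hf : LipschitzWith Kf f) (hfpos : ∀ x, 0 < f x) :
    ∀ ε : ℝ, 0 < ε → ∃ δ : ℝ, 0 < δ ∧ ∀ (n : ℕ) (x x' : X), dist x x' < δ →
      |FKiter κ V n f x - FKiter κ V n f x'| < ε * supNorm (FKiter κ V n f) := by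
  obtain _ | ⟨⟨x₀⟩⟩ := isEmpty_or_nonempty X
  · exact fun _ _ => ⟨1, one_pos, fun _ x => isEmptyElim x⟩
  exact FK_uniform_feller_general κ hκmeas hFeller hI hq0 hq1 hC.le
    (hasContractiveCoupling_of_maps (R := R) (R' := R') hC.le
      (fun x x' => hRmeas.comp (measurable_prodMk_left (x := (x, x'))))
      (fun x x' => hR'meas.comp (measurable_prodMk_left (x := (x, x')))) hRlaw hR'law hcouple)
    hV.locallyLipschitz hf (fun x => (hfpos x).le) fun h => (hfpos x₀).ne' (congrFun h x₀)
end
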